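/- arXiv:0712.1896 — 3 statements merged into one kernel-verified Lean document; each statement's English description precedes it below -/
import Mathlib

section
/- Under Assumptions A and B, for every n ≥ 1 the contraction semigroup {T_t^{(n)}}_{t≥0} on h^{⊗n} is uniformly continuous, i.e. lim_{t→0} ‖T_t^{(n)} − 1_{h^{⊗n}}‖ = 0. -/
/-!
STATEMENT 8: Under Assumptions A (A1, A2a, A2b, A3) and B (uniform continuity:
`lim_{t→0} sup{|⟨Ω,(U_t−1)(u,v)Ω⟩| : ‖u‖=‖v‖=1} = 0`), for every `n ≥ 1` the contraction
semigroup `{T_t^{(n)}}` on `h^{⊗n}` is uniformly continuous, i.e.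
`lim_{t→0⁺} ‖T_t^{(n)} − 1‖ = 0`.

Modelling as in the companion files: `E` models `h ⊗ H` (map `tmul`), `opAtE` gives the
operators `T(u,v)` on `H`, `K` models `h^{⊗n}` (map `tmuln`), Ω is a unit vector, and the
matrix elements of `T_t^{(n)}` on product vectors are given by vacuum expectations of
ordered products of the `opAtE (U 0 t) uᵢ vᵢ`.  Assumption B is expressed in ε-δ form;
`(U_t − 1)(u,v)` is `opAtE (U 0 t - 1) u v`.
-/

open scoped ComplexInnerProductSpace
open ContinuousLinearMap

theorem aux_key {ι H : Type*} [Fintype ι] [NormedAddCommGroup H] [InnerProductSpace ℂ H]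
    (B : ι → ι → (H →L[ℂ] H)) (Ω : H) (η : ℝ)
    (h1 : ∀ x : ι → H, ∑ i, ‖∑ j, B i j (x j)‖ ^ 2 ≤ ∑ j, ‖x j‖ ^ 2)
    (h2 : ∀ a : ι → ℂ, ∑ i, ‖∑ j, B i j (a j • Ω) - a i • Ω‖ ^ 2 ≤ η * ∑ j, ‖a j‖ ^ 2)
    (n : ℕ) : ∀ a : (Fin n → ι) → ℂ,
    ∑ I, ‖∑ J, ((List.ofFn fun k => B (I k) (J k)).prod) (a J • Ω) - a I • Ω‖ ^ 2
      ≤ ((2 ^ (n + 1) - 2) * η) * ∑ J, ‖a J‖ ^ 2 := by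
  induction n with
  | zero =>
    intro a
    simp
  | succ n ih =>
    intro a
    have hs : ∀ {M : Type _} [AddCommMonoid M] (f : (Fin (n + 1) → ι) → M),
        ∑ I, f I = ∑ i, ∑ I : Fin n → ι, f (Fin.cons i I) := by
      intro M _ f
      rw [← (Fin.consEquiv (fun _ => ι)).sum_comp f, Fintype.sum_prod_type]
      rfl
    have hs' : ∀ (f : (Fin (n + 1) → ι) → H),
        ∑ I, f I = ∑ i, ∑ I : Fin n → ι, f (Fin.cons i I) := by
      intro f
      rw [← (Fin.consEquiv (fun _ => ι)).sum_comp f, Fintype.sum_prod_type]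
      rfl
    rw [hs, hs (fun J => ‖a J‖ ^ 2)]
    simp only [hs']
    simp only [List.ofFn_succ, List.prod_cons, Fin.cons_zero, Fin.cons_succ]
    set D : ι → (Fin n → ι) → H := fun j I =>
      ∑ J, ((List.ofFn fun k => B (I k) (J k)).prod) (a (Fin.cons j J) • Ω)
        - a (Fin.cons j I) • Ω with hD
    have e : ∀ i I, ∑ j, ∑ J : Fin n → ι, (B i j * (List.ofFn fun k => B (I k) (J k)).prod)
        (a (Fin.cons j J) • Ω) - a (Fin.cons i I) • Ω
        = ∑ j, B i j (D j I) +
          (∑ j, B i j (a (Fin.cons j I) • Ω) - a (Fin.cons i I) • Ω) := by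
      intro i I
      rw [← add_sub_assoc, ← Finset.sum_add_distrib]
      congr 1
      refine Finset.sum_congr rfl fun j _ => ?_
      rw [← map_add, hD]
      simp only [sub_add_cancel, map_sum]
      rfl
    have hsq : ∀ x y : H, ‖x + y‖ ^ 2 ≤ 2 * ‖x‖ ^ 2 + 2 * ‖y‖ ^ 2 := by
      intro x y
      have := norm_add_le x y
      nlinarith [norm_nonneg (x + y), norm_nonneg x, norm_nonneg y, sq_nonneg (‖x‖ - ‖y‖)]
    calc _ ≤ ∑ i, ∑ I : Fin n → ι, (2 * ‖∑ j, B i j (D j I)‖ ^ 2 +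
          2 * ‖∑ j, B i j (a (Fin.cons j I) • Ω) - a (Fin.cons i I) • Ω‖ ^ 2) := by
          refine Finset.sum_le_sum fun i _ => Finset.sum_le_sum fun I _ => ?_
          rw [e]
          exact hsq _ _
      _ = 2 * ∑ I : Fin n → ι, ∑ i, ‖∑ j, B i j (D j I)‖ ^ 2 +
          2 * ∑ I : Fin n → ι, ∑ i,
            ‖∑ j, B i j (a (Fin.cons j I) • Ω) - a (Fin.cons i I) • Ω‖ ^ 2 := by
          simp only [Finset.sum_add_distrib, ← Finset.mul_sum]
          congr 2 <;> exact Finset.sum_comm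
      _ ≤ 2 * ∑ I : Fin n → ι, ∑ j, ‖D j I‖ ^ 2 +
          2 * ∑ I : Fin n → ι, η * ∑ j, ‖a (Fin.cons j I)‖ ^ 2 := by
          refine add_le_add (mul_le_mul_of_nonneg_left (Finset.sum_le_sum fun I _ => ?_)
            zero_le_two) (mul_le_mul_of_nonneg_left (Finset.sum_le_sum fun I _ => ?_) zero_le_two)
          · exact h1 _
          · exact h2 fun j => a (Fin.cons j I)
      _ = 2 * ∑ j, ∑ I : Fin n → ι, ‖D j I‖ ^ 2 +
          2 * (η * ∑ j, ∑ I : Fin n → ι, ‖a (Fin.cons j I)‖ ^ 2) := by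
          rw [Finset.sum_comm, ← Finset.mul_sum]
          congr 3
          exact Finset.sum_comm
      _ ≤ 2 * ∑ j, (((2 ^ (n + 1) - 2) * η) * ∑ I : Fin n → ι, ‖a (Fin.cons j I)‖ ^ 2) +
          2 * (η * ∑ j, ∑ I : Fin n → ι, ‖a (Fin.cons j I)‖ ^ 2) := by
          gcongr with j _
          exact ih fun J => a (Fin.cons j J)
      _ = _ := by
          rw [← Finset.mul_sum]
          ring

/-- Product vectors with entries in the span of an orthonormal family. -/
theorem aux_expand {h K : Type*}
    [NormedAddCommGroup h] [InnerProductSpace ℂ h]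
    [NormedAddCommGroup K] [InnerProductSpace ℂ K]
    (n : ℕ) (tmuln : (Fin n → h) → K)
    (htmuln : ∀ u v : Fin n → h, ⟪tmuln u, tmuln v⟫ = ∏ i, ⟪u i, v i⟫)
    (hdenseK : (Submodule.span ℂ (Set.range tmuln)).topologicalClosure = ⊤)
    {ι : Type*} [Fintype ι] (e : ι → h) (u : Fin n → h)
    (hu : ∀ k, u k = ∑ j, ⟪e j, u k⟫ • e j) :
    tmuln u = ∑ J : Fin n → ι, (∏ k, ⟪e (J k), u k⟫) • tmuln (fun k => e (J k)) := by
  classical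
  have hd : Dense ((Submodule.span ℂ (Set.range tmuln) : Submodule ℂ K) : Set K) := by
    rw [Submodule.dense_iff_topologicalClosure_eq_top]; exact hdenseK
  refine hd.eq_of_inner_right (𝕜 := ℂ) ?_
  intro v hv
  induction hv using Submodule.span_induction with
  | mem x hx =>
    obtain ⟨w, rfl⟩ := hx
    rw [inner_sum, htmuln]
    simp only [inner_smul_right, htmuln, ← Finset.prod_mul_distrib]
    have := Finset.prod_univ_sum (fun _ : Fin n => (Finset.univ : Finset ι))
      (fun k j => ⟪e j, u k⟫ * ⟪w k, e j⟫)
    rw [Fintype.piFinset_univ] at this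
    rw [← this]
    refine Finset.prod_congr rfl fun k _ => ?_
    conv_lhs => rw [hu k, inner_sum]
    simp only [inner_smul_right]
  | zero => simp
  | add x y _ _ hx hy => rw [inner_add_left, inner_add_left, hx, hy]
  | smul c x _ hx => rw [inner_smul_left, inner_smul_left, hx]

theorem aux_fin {h K : Type*}
    [NormedAddCommGroup h] [InnerProductSpace ℂ h]
    [NormedAddCommGroup K] [InnerProductSpace ℂ K]
    (n : ℕ) (tmuln : (Fin n → h) → K)
    (φ : K) (hφ : φ ∈ Submodule.span ℂ (Set.range tmuln)) :
    ∃ F : Submodule ℂ h, FiniteDimensional ℂ F ∧ ∀ F' : Submodule ℂ h, F ≤ F' →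
      φ ∈ Submodule.span ℂ (tmuln '' {u | ∀ k, u k ∈ F'}) := by
  induction hφ using Submodule.span_induction with
  | mem x hx =>
    obtain ⟨w, rfl⟩ := hx
    refine ⟨Submodule.span ℂ (Set.range w), FiniteDimensional.span_of_finite ℂ
      (Set.finite_range w), fun F' hF' => Submodule.subset_span ⟨w, fun k => hF' ?_, rfl⟩⟩
    exact Submodule.subset_span ⟨k, rfl⟩
  | zero => exact ⟨⊥, inferInstance, fun _ _ => zero_mem _⟩
  | add x y _ _ hx hy =>
    obtain ⟨F, hF, hx⟩ := hx
    obtain ⟨G, hG, hy⟩ := hy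
    exact ⟨F ⊔ G, inferInstance, fun F' hF' => add_mem (hx _ (le_sup_left.trans hF'))
      (hy _ (le_sup_right.trans hF'))⟩
  | smul c x _ hx =>
    obtain ⟨F, hF, hx⟩ := hx
    exact ⟨F, hF, fun F' hF' => Submodule.smul_mem _ _ (hx _ hF')⟩

theorem aux_repr {h K : Type*}
    [NormedAddCommGroup h] [InnerProductSpace ℂ h]
    [NormedAddCommGroup K] [InnerProductSpace ℂ K]
    (n : ℕ) (tmuln : (Fin n → h) → K)
    (htmuln : ∀ u v : Fin n → h, ⟪tmuln u, tmuln v⟫ = ∏ i, ⟪u i, v i⟫)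
    (hdenseK : (Submodule.span ℂ (Set.range tmuln)).topologicalClosure = ⊤)
    (φ ψ : K) (hφ : φ ∈ Submodule.span ℂ (Set.range tmuln))
    (hψ : ψ ∈ Submodule.span ℂ (Set.range tmuln)) :
    ∃ (d : ℕ) (e : Fin d → h) (a b : (Fin n → Fin d) → ℂ), Orthonormal ℂ e ∧
      φ = ∑ J, a J • tmuln (fun k => e (J k)) ∧ ψ = ∑ J, b J • tmuln (fun k => e (J k)) := by
  obtain ⟨F, hF, h1⟩ := aux_fin n tmuln φ hφ
  obtain ⟨G, hG, h2⟩ := aux_fin n tmuln ψ hψ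
  set S := F ⊔ G with hS
  have : FiniteDimensional ℂ S := by rw [hS]; infer_instance
  let β := stdOrthonormalBasis ℂ S
  let e : Fin (Module.finrank ℂ S) → h := fun i => (β i : h)
  have he : Orthonormal ℂ e := by
    have := β.orthonormal.comp_linearIsometry S.subtypeₗᵢ
    exact this
  have hle : Submodule.span ℂ (tmuln '' {u | ∀ k, u k ∈ S}) ≤
      Submodule.span ℂ (Set.range fun J : Fin n → Fin (Module.finrank ℂ S) =>
        tmuln fun k => e (J k)) := by
    rw [Submodule.span_le]
    rintro _ ⟨u, hu, rfl⟩
    rw [aux_expand n tmuln htmuln hdenseK e u]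
    · exact Submodule.sum_mem _ fun J _ => Submodule.smul_mem _ _ (Submodule.subset_span ⟨J, rfl⟩)
    · intro k
      have := β.sum_repr' ⟨u k, hu k⟩
      have := congrArg (Subtype.val) this
      simpa [e] using this.symm
  obtain ⟨a, ha⟩ := (Submodule.mem_span_range_iff_exists_fun ℂ).1 (hle (h1 S le_sup_left))
  obtain ⟨b, hb⟩ := (Submodule.mem_span_range_iff_exists_fun ℂ).1 (hle (h2 S le_sup_right))
  exact ⟨_, e, a, b, he, ha.symm, hb.symm⟩

theorem aux_norm_sq {K : Type*} [NormedAddCommGroup K] [InnerProductSpace ℂ K]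
    {ι : Type*} [Fintype ι] (f : ι → K) (x : ι → ℂ) (hf : Orthonormal ℂ f) :
    ‖∑ i, x i • f i‖ ^ 2 = ∑ i, ‖x i‖ ^ 2 := by
  have := hf.inner_sum x x Finset.univ
  rw [inner_self_eq_norm_sq_to_K] at this
  have h2 : ∀ i, (starRingEnd ℂ) (x i) * x i = ((‖x i‖ ^ 2 : ℝ) : ℂ) := by
    intro i; rw [Complex.conj_mul']; push_cast; rfl
  simp only [h2, ← Complex.ofReal_sum] at this
  apply Complex.ofReal_injective
  rw [← this]
  push_cast
  rfl

theorem aux_sum {h H E : Type*}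
    [NormedAddCommGroup h] [InnerProductSpace ℂ h]
    [NormedAddCommGroup H] [InnerProductSpace ℂ H]
    [NormedAddCommGroup E] [InnerProductSpace ℂ E]
    (tmul : h →ₗ[ℂ] H →ₗ[ℂ] E)
    (htmul : ∀ (u v : h) (ξ ζ : H), ⟪tmul u ξ, tmul v ζ⟫ = ⟪u, v⟫ * ⟪ξ, ζ⟫)
    {ι : Type*} [Fintype ι] (e : ι → h) (he : Orthonormal ℂ e) (y : ι → H) :
    ‖∑ i, tmul (e i) (y i)‖ ^ 2 = ∑ i, ‖y i‖ ^ 2 := by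
  classical
  have h1 : ⟪∑ i, tmul (e i) (y i), ∑ i, tmul (e i) (y i)⟫ = ((∑ i, ‖y i‖ ^ 2 : ℝ) : ℂ) := by
    rw [sum_inner]
    push_cast
    refine Finset.sum_congr rfl fun i _ => ?_
    rw [inner_sum]
    simp only [htmul, orthonormal_iff_ite.1 he, ite_mul, one_mul, zero_mul, Finset.sum_ite_eq,
      Finset.mem_univ, if_true]
    rw [inner_self_eq_norm_sq_to_K]; rfl
  rw [inner_self_eq_norm_sq_to_K] at h1
  apply Complex.ofReal_injective
  rw [← h1]
  push_cast
  rfl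

theorem aux_bessel {h H E : Type*}
    [NormedAddCommGroup h] [InnerProductSpace ℂ h]
    [NormedAddCommGroup H] [InnerProductSpace ℂ H]
    [NormedAddCommGroup E] [InnerProductSpace ℂ E]
    (tmul : h →ₗ[ℂ] H →ₗ[ℂ] E)
    (htmul : ∀ (u v : h) (ξ ζ : H), ⟪tmul u ξ, tmul v ζ⟫ = ⟪u, v⟫ * ⟪ξ, ζ⟫)
    {ι : Type*} [Fintype ι] (e : ι → h) (he : Orthonormal ℂ e) (y : ι → H) (z : E)
    (hy : ∀ i ξ, ⟪ξ, y i⟫ = ⟪tmul (e i) ξ, z⟫) :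
    ∑ i, ‖y i‖ ^ 2 ≤ ‖z‖ ^ 2 := by
  have hw := aux_sum tmul htmul e he y
  set w := ∑ i, tmul (e i) (y i) with hwdef
  have h1 : ⟪w, z⟫ = ((∑ i, ‖y i‖ ^ 2 : ℝ) : ℂ) := by
    rw [hwdef, sum_inner]
    push_cast
    refine Finset.sum_congr rfl fun i _ => ?_
    rw [← hy, inner_self_eq_norm_sq_to_K]; rfl
  have h2 := norm_inner_le_norm (𝕜 := ℂ) w z
  rw [h1, ← hw] at h2
  rw [← hw]
  rw [Complex.norm_real, Real.norm_of_nonneg (by positivity)] at h2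
  nlinarith [norm_nonneg w, norm_nonneg z, sq_nonneg (‖w‖ - ‖z‖)]

theorem stmt8
    {h H E K : Type*}
    [NormedAddCommGroup h] [InnerProductSpace ℂ h] [CompleteSpace h]
    [TopologicalSpace.SeparableSpace h]
    [NormedAddCommGroup H] [InnerProductSpace ℂ H] [CompleteSpace H]
    [TopologicalSpace.SeparableSpace H]
    [NormedAddCommGroup E] [InnerProductSpace ℂ E] [CompleteSpace E]
    [NormedAddCommGroup K] [InnerProductSpace ℂ K] [CompleteSpace K]
    (tmul : h →ₗ[ℂ] H →ₗ[ℂ] E)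
    (htmul : ∀ (u v : h) (ξ ζ : H), ⟪tmul u ξ, tmul v ζ⟫ = ⟪u, v⟫ * ⟪ξ, ζ⟫)
    (hdenseE : (Submodule.span ℂ (Set.range fun p : h × H => tmul p.1 p.2)).topologicalClosure = ⊤)
    (opAtE : (E →L[ℂ] E) → h → h → (H →L[ℂ] H))
    (hopAtE : ∀ (T : E →L[ℂ] E) (u v : h) (ξ₁ ξ₂ : H),
      ⟪ξ₁, opAtE T u v ξ₂⟫ = ⟪tmul u ξ₁, T (tmul v ξ₂)⟫)
    (Ω : H) (hΩ : ‖Ω‖ = 1)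
    (U : ℝ → ℝ → (E →L[ℂ] E))
    (hUunitary : ∀ s t : ℝ, 0 ≤ s → s ≤ t →
      adjoint (U s t) * U s t = 1 ∧ U s t * adjoint (U s t) = 1)
    -- (A1) evolution
    (hA1 : ∀ r s t : ℝ, 0 ≤ r → r ≤ s → s ≤ t → U r s * U s t = U r t)
    -- (A2a) commutation of increments over disjoint intervals
    (hA2a : ∀ s₁ t₁ s₂ t₂ : ℝ, 0 ≤ s₁ → s₁ ≤ t₁ → 0 ≤ s₂ → s₂ ≤ t₂ →
      Disjoint (Set.Ico s₁ t₁) (Set.Ico s₂ t₂) →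
      ∀ u₁ v₁ u₂ v₂ : h,
        Commute (opAtE (U s₁ t₁) u₁ v₁) (opAtE (U s₂ t₂) u₂ v₂) ∧
        Commute (opAtE (U s₁ t₁) u₁ v₁) (opAtE (adjoint (U s₂ t₂)) u₂ v₂))
    -- (A2b) factorisation of vacuum expectations over disjoint intervals
    (hA2b : ∀ s₁ t₁ s₂ t₂ : ℝ, 0 ≤ s₁ → s₁ ≤ t₁ → 0 ≤ s₂ → s₂ ≤ t₂ →
      Disjoint (Set.Ico s₁ t₁) (Set.Ico s₂ t₂) →
      ∀ (N M : ℕ) (a b : Fin N → ℝ) (q r : Fin M → ℝ)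
        (ε : Fin N → Bool) (ε' : Fin M → Bool)
        (u v : Fin N → h) (p w : Fin M → h),
        (∀ i, s₁ ≤ a i ∧ a i ≤ b i ∧ b i ≤ t₁) →
        (∀ i j : Fin N, i < j → b i ≤ a j) →
        (∀ i, s₂ ≤ q i ∧ q i ≤ r i ∧ r i ≤ t₂) →
        (∀ i j : Fin M, i < j → r i ≤ q j) →
        ⟪Ω, (((List.ofFn fun i => opAtE
                (if ε i then adjoint (U (a i) (b i)) else U (a i) (b i)) (u i) (v i)).prod) *
             ((List.ofFn fun i => opAtE
                (if ε' i then adjoint (U (q i) (r i)) else U (q i) (r i)) (p i) (w i)).prod)) Ω⟫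
          = ⟪Ω, ((List.ofFn fun i => opAtE
                  (if ε i then adjoint (U (a i) (b i)) else U (a i) (b i)) (u i) (v i)).prod) Ω⟫
            * ⟪Ω, ((List.ofFn fun i => opAtE
                  (if ε' i then adjoint (U (q i) (r i)) else U (q i) (r i)) (p i) (w i)).prod) Ω⟫)
    -- (A3) stationarity
    (hA3 : ∀ (s t : ℝ), 0 ≤ s → s ≤ t → ∀ (N : ℕ) (ε : Fin N → Bool) (u v : Fin N → h),
      ⟪Ω, ((List.ofFn fun i => opAtE
              (if ε i then adjoint (U s t) else U s t) (u i) (v i)).prod) Ω⟫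
        = ⟪Ω, ((List.ofFn fun i => opAtE
              (if ε i then adjoint (U 0 (t - s)) else U 0 (t - s)) (u i) (v i)).prod) Ω⟫)
    -- (B) uniform continuity
    (hB : ∀ δ : ℝ, 0 < δ → ∃ τ : ℝ, 0 < τ ∧ ∀ t : ℝ, 0 < t → t < τ →
      ∀ u v : h, ‖u‖ = 1 → ‖v‖ = 1 →
        ‖⟪Ω, (opAtE (U 0 t - 1) u v) Ω⟫‖ < δ)
    (n : ℕ) (hn : 1 ≤ n)
    (tmuln : (Fin n → h) → K)
    (htmuln : ∀ u v : Fin n → h, ⟪tmuln u, tmuln v⟫ = ∏ i, ⟪u i, v i⟫)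
    (hdenseK : (Submodule.span ℂ (Set.range tmuln)).topologicalClosure = ⊤)
    -- the expectation semigroup T_t^{(n)}
    (T : ℝ → (K →L[ℂ] K))
    (hT : ∀ (t : ℝ) (u v : Fin n → h),
      ⟪tmuln u, T t (tmuln v)⟫
        = ⟪Ω, ((List.ofFn fun i => opAtE (U 0 t) (u i) (v i)).prod) Ω⟫) :
    Filter.Tendsto (fun t : ℝ => ‖T t - 1‖) (nhdsWithin 0 (Set.Ioi 0)) (nhds 0) := by
  classical
  have hopsub : ∀ (X : E →L[ℂ] E) (u v : h) (ξ : H),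
      opAtE (X - 1) u v ξ = opAtE X u v ξ - ⟪u, v⟫ • ξ := by
    intro X u v ξ
    refine ext_inner_left ℂ fun ζ => ?_
    rw [hopAtE, inner_sub_right, hopAtE, inner_smul_right, ← htmul, sub_apply, inner_sub_right]
    rfl
  -- the bound on `(U-1)(a ⊗ Ω)`
  have hbound : ∀ (t δ : ℝ), 0 < t → 0 < δ →
      (∀ u v : h, ‖u‖ = 1 → ‖v‖ = 1 → ‖⟪Ω, (opAtE (U 0 t - 1) u v) Ω⟫‖ < δ) →
      ∀ a : h, ‖(U 0 t - 1) (tmul a Ω)‖ ^ 2 ≤ 2 * δ * ‖a‖ ^ 2 := by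
    intro t δ ht hδ hb a
    have hU := (hUunitary 0 t le_rfl ht.le).1
    have hn : ∀ x, ‖U 0 t x‖ = ‖x‖ := (norm_map_iff_adjoint_comp_self (U 0 t)).2 hU
    have hunit : ∀ a : h, ‖a‖ = 1 → ‖(U 0 t - 1) (tmul a Ω)‖ ^ 2 ≤ 2 * δ := by
      intro a ha
      have h1 := hb a a ha ha
      rw [hopAtE] at h1
      set x := tmul a Ω
      have h2 : ((U 0 t - 1) x) = U 0 t x - x := rfl
      have h3 := norm_sub_sq (𝕜 := ℂ) (U 0 t x) x
      have h4 : RCLike.re ⟪x, (U 0 t - 1) x⟫ = RCLike.re ⟪U 0 t x, x⟫ - ‖x‖ ^ 2 := by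
        rw [h2, inner_sub_right, map_sub, inner_re_symm, inner_self_eq_norm_sq]
      have h5 := RCLike.abs_re_le_norm (⟪x, (U 0 t - 1) x⟫)
      rw [hn] at h3
      rw [← h2] at h3
      have h6 := neg_abs_le (RCLike.re ⟪x, (U 0 t - 1) x⟫)
      linarith
    by_cases ha : a = 0
    · subst ha; simp
    · have hna : ‖a‖ ≠ 0 := norm_ne_zero_iff.2 ha
      have h1 := hunit (((‖a‖⁻¹ : ℝ) : ℂ) • a) (by
        rw [norm_smul, Complex.norm_real, norm_inv, norm_norm, inv_mul_cancel₀ hna])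
      rw [map_smul, LinearMap.smul_apply, map_smul, norm_smul, Complex.norm_real, norm_inv,
        norm_norm, mul_pow, inv_pow, inv_mul_le_iff₀ (by positivity)] at h1
      linarith
  have hmain : ∀ (t δ : ℝ), 0 < t → 0 < δ →
      (∀ u v : h, ‖u‖ = 1 → ‖v‖ = 1 → ‖⟪Ω, (opAtE (U 0 t - 1) u v) Ω⟫‖ < δ) →
      ‖T t - 1‖ ≤ Real.sqrt ((2 ^ (n + 1) - 2) * (2 * δ)) := by
    intro t δ ht hδ hb
    have hU := (hUunitary 0 t le_rfl ht.le).1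
    have hn : ∀ x, ‖U 0 t x‖ = ‖x‖ := (norm_map_iff_adjoint_comp_self (U 0 t)).2 hU
    set M := Real.sqrt ((2 ^ (n + 1) - 2) * (2 * δ)) with hM
    have hC : (0 : ℝ) ≤ (2 ^ (n + 1) - 2) * (2 * δ) := by
      have : (1 : ℝ) ≤ 2 ^ n := one_le_pow₀ (by norm_num)
      have : (0 : ℝ) ≤ 2 ^ (n + 1) - 2 := by rw [pow_succ]; linarith
      positivity
    have hspan : ∀ φ ∈ Submodule.span ℂ (Set.range tmuln),
        ∀ ψ ∈ Submodule.span ℂ (Set.range tmuln),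
        ‖⟪φ, (T t - 1) ψ⟫‖ ≤ M * ‖φ‖ * ‖ψ‖ := by
      intro φ hφ ψ hψ
      obtain ⟨d, e, a, b, he, hφe, hψe⟩ := aux_repr n tmuln htmuln hdenseK φ ψ hφ hψ
      set f : (Fin n → Fin d) → K := fun J => tmuln fun k => e (J k) with hf
      have hfo : Orthonormal ℂ f := by
        rw [orthonormal_iff_ite]
        intro I J
        rw [hf]
        simp only [htmuln, orthonormal_iff_ite.1 he]
        rw [Finset.prod_ite_zero]
        simp [funext_iff]
      have hφn : ‖φ‖ ^ 2 = ∑ J, ‖a J‖ ^ 2 := by rw [hφe]; exact aux_norm_sq f a hfo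
      have hψn : ‖ψ‖ ^ 2 = ∑ J, ‖b J‖ ^ 2 := by rw [hψe]; exact aux_norm_sq f b hfo
      let B : Fin d → Fin d → (H →L[ℂ] H) := fun i j => opAtE (U 0 t) (e i) (e j)
      have hB1 : ∀ x : Fin d → H, ∑ i, ‖∑ j, B i j (x j)‖ ^ 2 ≤ ∑ j, ‖x j‖ ^ 2 := by
        intro x
        rw [← aux_sum tmul htmul e he x, ← hn]
        refine aux_bessel tmul htmul e he _ _ ?_
        intro i ξ
        rw [inner_sum, map_sum, inner_sum]
        exact Finset.sum_congr rfl fun j _ => hopAtE _ _ _ _ _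
      have hB2 : ∀ c : Fin d → ℂ, ∑ i, ‖∑ j, B i j (c j • Ω) - c i • Ω‖ ^ 2
          ≤ (2 * δ) * ∑ j, ‖c j‖ ^ 2 := by
        intro c
        rw [← aux_norm_sq e c he]
        refine le_trans ?_ (hbound t δ ht hδ hb (∑ j, c j • e j))
        refine aux_bessel tmul htmul e he _ _ ?_
        intro i ξ
        have : ∑ j, B i j (c j • Ω) - c i • Ω
            = ∑ j, c j • opAtE (U 0 t - 1) (e i) (e j) Ω := by
          simp only [hopsub, orthonormal_iff_ite.1 he, smul_sub, Finset.sum_sub_distrib, map_smul, B]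
          congr 1
          simp
        rw [this, inner_sum, map_sum, LinearMap.sum_apply, map_sum, inner_sum]
        refine Finset.sum_congr rfl fun j _ => ?_
        rw [inner_smul_right, hopAtE, map_smul, LinearMap.smul_apply, map_smul, inner_smul_right]
      have key := aux_key B Ω (2 * δ) hB1 hB2 n b
      set z : (Fin n → Fin d) → H := fun I =>
        ∑ J, ((List.ofFn fun k => B (I k) (J k)).prod) (b J • Ω) - b I • Ω with hz
      have hΩ1 : ⟪Ω, Ω⟫ = (1 : ℂ) := by
        rw [inner_self_eq_norm_sq_to_K, hΩ]; simp
      have hin : ⟪φ, (T t - 1) ψ⟫ = ∑ I, (starRingEnd ℂ) (a I) * ⟪Ω, z I⟫ := by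
        rw [hφe, sum_inner]
        refine Finset.sum_congr rfl fun I _ => ?_
        rw [inner_smul_left]
        congr 1
        rw [sub_apply, inner_sub_right, hz]
        simp only [inner_sub_right, inner_sum, inner_smul_right, map_smul, hΩ1, mul_one]
        rw [show (1 : K →L[ℂ] K) ψ = ψ from rfl]
        congr 1
        · rw [hψe, map_sum, inner_sum]
          refine Finset.sum_congr rfl fun J _ => ?_
          rw [map_smul, inner_smul_right, hT]
        · rw [hψe]
          exact hfo.inner_right_fintype b I
      have hcs : ‖⟪φ, (T t - 1) ψ⟫‖ ^ 2 ≤ (∑ I, ‖a I‖ ^ 2) * ∑ I, ‖z I‖ ^ 2 := by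
        rw [hin]
        refine le_trans ?_ (Finset.sum_mul_sq_le_sq_mul_sq _ _ _)
        refine pow_le_pow_left₀ (norm_nonneg _) ?_ 2
        refine (norm_sum_le _ _).trans (Finset.sum_le_sum fun I _ => ?_)
        rw [norm_mul, RCLike.norm_conj]
        gcongr
        refine (norm_inner_le_norm _ _).trans ?_
        rw [hΩ, one_mul]
      refine abs_le_of_sq_le_sq' ?_ (by positivity) |>.2
      rw [mul_pow, mul_pow, hM, Real.sq_sqrt hC]
      refine hcs.trans ?_
      rw [← hφn, mul_comm _ (‖φ‖ ^ 2), mul_assoc, hψn]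
      gcongr
    have hd : Dense ((Submodule.span ℂ (Set.range tmuln) : Submodule ℂ K) : Set K) := by
      rw [Submodule.dense_iff_topologicalClosure_eq_top]; exact hdenseK
    have hall : ∀ φ ψ : K, ‖⟪φ, (T t - 1) ψ⟫‖ ≤ M * ‖φ‖ * ‖ψ‖ := by
      refine isClosed_property2 (e := ((↑) : Submodule.span ℂ (Set.range tmuln) → K))
        hd.denseRange_val ?_ ?_
      · refine isClosed_le ?_ ?_
        · fun_prop
        · fun_prop
      · intro φ ψ
        exact hspan _ φ.2 _ ψ.2
    refine opNorm_le_bound _ (Real.sqrt_nonneg _) fun ψ => ?_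
    have h1 := hall ((T t - 1) ψ) ψ
    rw [inner_self_eq_norm_sq_to_K, norm_pow, RCLike.norm_ofReal, abs_norm] at h1
    rcases (norm_nonneg ((T t - 1) ψ)).eq_or_lt with h0 | h0
    · rw [← h0]; positivity
    · refine le_of_mul_le_mul_left ?_ h0
      linarith
  rw [Metric.tendsto_nhds]
  intro ρ hρ
  set C : ℝ := (2 ^ (n + 1) - 2) * 2 with hCd
  have hCpos : 0 < C := by
    have : (2 : ℝ) ≤ 2 ^ n := by
      calc (2 : ℝ) = 2 ^ 1 := by norm_num
        _ ≤ 2 ^ n := pow_le_pow_right₀ (by norm_num) hn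
    rw [hCd, pow_succ]; linarith
  have hδ : 0 < (ρ / 2) ^ 2 / C := by positivity
  obtain ⟨τ, hτ, hb⟩ := hB _ hδ
  filter_upwards [Ioo_mem_nhdsGT hτ] with t ht
  have h1 := hmain t _ ht.1 hδ (hb t ht.1 ht.2)
  have h2 : (2 ^ (n + 1) - 2) * (2 * ((ρ / 2) ^ 2 / C)) = (ρ / 2) ^ 2 := by
    rw [← mul_assoc, ← hCd]; field_simp
  rw [h2, Real.sqrt_sq (by positivity)] at h1
  rw [dist_zero_right, norm_norm]
  linarith
end

section
/- Let {U_t}_{t≥0} be unitary operators on h⊗H and Ω a unit vector in H. For all t ≥ 0, m, n ≥ 1, all product vectors v ∈ h^{⊗m} and w ∈ h^{⊗n}, and arbitrary orthonormal bases {φ_k^{(m)}} of h^{⊗m} and {φ_k^{(n)}} of h^{⊗n}: Σ_k |⟨U_t^{(m)}(φ_k^{(m)}, v)Ω, U_t^{(n)}(φ_k^{(n)}, w)Ω⟩ − conj(⟨φ_k^{(m)}, v⟩)·⟨φ_k^{(n)}, w⟩| ≤ √2·‖v‖·‖w‖·(√‖T_t^{(m)} − 1‖ + √‖T_t^{(n)}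 − 1‖). (This yields uniform continuity of the semigroup Z_t^{(m,n)} in trace norm.) -/
/-!
STATEMENT 13: Let `{U_t}` be unitaries on `h ⊗ H` and `Ω` a unit vector of `H`.  For
`t ≥ 0`, `m, n ≥ 1`, product vectors `v ∈ h^{⊗m}`, `w ∈ h^{⊗n}` and arbitrary orthonormal
bases `{φ_k^{(m)}}` of `h^{⊗m}` and `{φ_k^{(n)}}` of `h^{⊗n}` (indexed by a common set):
`Σ_k |⟨U_t^{(m)}(φ_k^{(m)}, v)Ω, U_t^{(n)}(φ_k^{(n)}, w)Ω⟩ − conj(⟨φ_k^{(m)}, v⟩)·⟨φ_k^{(n)}, w⟩|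
  ≤ √2·‖v‖·‖w‖·(√‖T_t^{(m)} − 1‖ + √‖T_t^{(n)} − 1‖)`.

Modelling: `E` models `h ⊗ H` (map `tmul`), `opAtE` gives `T(u,v)` on `H`; `Km`, `Kn`
model `h^{⊗m}`, `h^{⊗n}` (maps `tmulm`, `tmuln`); `Fm`, `Fn` model `h^{⊗m} ⊗ H`,
`h^{⊗n} ⊗ H` (maps `tmulFm`, `tmulFn`), all with characteristic inner-product identities
and dense spans; `opAtFm`, `opAtFn` give `T(x,y)` on `H` for operators on `Fm`, `Fn`.
`Um t`, `Un t` are the ampliations `U_t^{(m)}`, `U_t^{(n)}`, characterised on product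
vectors by the slot-wise ordered products, and `Tm`, `Tn` are the expectation semigroups.
The conclusion asserts summability together with the bound on the sum.
-/

open scoped ComplexInnerProductSpace
open ContinuousLinearMap

open scoped ComplexOrder in
/-- Products of Gram kernels are positive semidefinite (Schur). -/
theorem aux_psd {h J : Type*} [NormedAddCommGroup h] [InnerProductSpace ℂ h] [Fintype J]
    (m : ℕ) (x : J → Fin m → h) :
    (Matrix.of fun j k : J => ∏ i, ⟪x j i, x k i⟫ : Matrix J J ℂ).PosSemidef := by
  induction m with
  | zero =>
    have := Matrix.posSemidef_gram ℂ (fun _ : J => (1 : ℂ))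
    have e : (Matrix.of fun j k : J => ∏ i, ⟪x j i, x k i⟫ : Matrix J J ℂ) =
        Matrix.gram ℂ (fun _ : J => (1 : ℂ)) := by
      ext j k
      simp
    rw [e]
    exact this
  | succ m ih =>
    have h1 := ih (fun j i => x j i.succ)
    have h2 := Matrix.posSemidef_gram ℂ (fun j : J => x j 0)
    have e : (Matrix.of fun j k : J => ∏ i, ⟪x j i, x k i⟫ : Matrix J J ℂ) =
        (Matrix.gram ℂ (fun j : J => x j 0)).hadamard
          (Matrix.of fun j k : J => ∏ i : Fin m, ⟪x j i.succ, x k i.succ⟫) := by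
      ext j k
      simp [Fin.prod_univ_succ]
    rw [e]
    exact h2.hadamard h1

theorem aux_expand_s13 {G J : Type*} [NormedAddCommGroup G] [InnerProductSpace ℂ G] [Fintype J]
    (M : Matrix J J ℂ) (N : ℕ) (B : Fin N → J → ℂ)
    (hB : M = ∑ i, Matrix.vecMulVec (B i) (star (B i))) (y : J → G) :
    (∑ j, ∑ k, M j k * ⟪y j, y k⟫) =
      ∑ a, ⟪∑ j, star (B a j) • y j, ∑ j, star (B a j) • y j⟫ := by
  have h1 : ∀ a, ⟪∑ j, star (B a j) • y j, ∑ j, star (B a j) • y j⟫ =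
      ∑ j, ∑ k, (B a j * star (B a k)) * ⟪y j, y k⟫ := by
    intro a
    rw [sum_inner]
    refine Finset.sum_congr rfl fun j _ => ?_
    rw [inner_sum]
    refine Finset.sum_congr rfl fun k _ => ?_
    rw [inner_smul_left, inner_smul_right]
    simp
    ring
  rw [Finset.sum_congr rfl fun a _ => h1 a]
  conv_rhs => rw [Finset.sum_comm]
  refine Finset.sum_congr rfl fun j _ => ?_
  conv_rhs => rw [Finset.sum_comm]
  refine Finset.sum_congr rfl fun k _ => ?_
  rw [hB, Matrix.sum_apply, Finset.sum_mul]
  refine Finset.sum_congr rfl fun a _ => ?_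
  simp [Matrix.vecMulVec_apply]

open scoped ComplexOrder in
/-- A contraction (up to a constant) decreases PSD-weighted Gram sums. -/
theorem aux_contr {E H J : Type*} [NormedAddCommGroup E] [InnerProductSpace ℂ E]
    [NormedAddCommGroup H] [InnerProductSpace ℂ H] [Fintype J]
    (M : Matrix J J ℂ) (hM : M.PosSemidef) (C : E →L[ℂ] H) (c : ℝ)
    (hC : ∀ e, ‖C e‖ ≤ c * ‖e‖) (z : J → E) :
    (∑ j, ∑ k, M j k * ⟪C (z j), C (z k)⟫).re ≤ c ^ 2 * (∑ j, ∑ k, M j k * ⟪z j, z k⟫).re := by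
  classical
  obtain ⟨N, B, hB⟩ := Matrix.posSemidef_iff_eq_sum_vecMulVec.mp hM
  rw [aux_expand_s13 M N B hB, aux_expand_s13 M N B hB, Complex.re_sum, Complex.re_sum, Finset.mul_sum]
  refine Finset.sum_le_sum fun a _ => ?_
  have e1 : ∑ j, star (B a j) • C (z j) = C (∑ j, star (B a j) • z j) := by simp
  rw [e1]
  have n1 : ∀ w : E, (⟪w, w⟫ : ℂ).re = ‖w‖ ^ 2 := fun w => inner_self_eq_norm_sq (𝕜 := ℂ) w
  have n2 : ∀ w : H, (⟪w, w⟫ : ℂ).re = ‖w‖ ^ 2 := fun w => inner_self_eq_norm_sq (𝕜 := ℂ) w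
  rw [n1, n2, ← mul_pow]
  exact pow_le_pow_left₀ (norm_nonneg _) (hC _) 2

theorem aux_key_s13 {h H E J : Type*} [Fintype J]
    [NormedAddCommGroup h] [InnerProductSpace ℂ h]
    [NormedAddCommGroup H] [InnerProductSpace ℂ H] [CompleteSpace H]
    [NormedAddCommGroup E] [InnerProductSpace ℂ E] [CompleteSpace E]
    (tmul : h →ₗ[ℂ] H →ₗ[ℂ] E)
    (htmul : ∀ (u v : h) (ξ ζ : H), ⟪tmul u ξ, tmul v ζ⟫ = ⟪u, v⟫ * ⟪ξ, ζ⟫)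
    (U : E →L[ℂ] E) (hU : ∀ e, ‖U e‖ ≤ ‖e‖)
    (A : h → h → (H →L[ℂ] H))
    (hA : ∀ (u v : h) (ξ₁ ξ₂ : H), ⟪ξ₁, A u v ξ₂⟫ = ⟪tmul u ξ₁, U (tmul v ξ₂)⟫)
    (m : ℕ) (x : J → Fin m → h) (y : Fin m → h) (ξ : J → H) (ζ : H) :
    ‖∑ j, ⟪ξ j, ((List.ofFn fun i => A (x j i) (y i)).prod) ζ⟫‖ ^ 2 ≤
      (∑ j, ∑ k, (∏ i, ⟪x j i, x k i⟫) * ⟪ξ j, ξ k⟫).re * ((∏ i, ‖y i‖ ^ 2) * ‖ζ‖ ^ 2) := by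
  induction m generalizing ξ with
  | zero =>
    simp only [List.ofFn_zero, List.prod_nil, ContinuousLinearMap.one_apply, Finset.univ_eq_empty,
      Finset.prod_empty, one_mul]
    rw [← sum_inner]
    have : ∑ j, ∑ k, ⟪ξ j, ξ k⟫ = ⟪∑ j, ξ j, ∑ j, ξ j⟫ := by
      simp only [sum_inner, inner_sum]
      rw [Finset.sum_comm]
    rw [this]
    have n2 : ∀ w : H, (⟪w, w⟫ : ℂ).re = ‖w‖ ^ 2 := fun w => inner_self_eq_norm_sq (𝕜 := ℂ) w
    rw [n2, ← mul_pow]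
    exact pow_le_pow_left₀ (norm_nonneg _) (norm_inner_le_norm _ _) 2
  | succ m ih =>
    have hn : ∀ ζ : H, ‖tmul (y 0) ζ‖ = ‖y 0‖ * ‖ζ‖ := by
      intro ζ
      have h1 := htmul (y 0) (y 0) ζ ζ
      rw [inner_self_eq_norm_sq_to_K, inner_self_eq_norm_sq_to_K, inner_self_eq_norm_sq_to_K] at h1
      have h2 : ‖tmul (y 0) ζ‖ ^ 2 = (‖y 0‖ * ‖ζ‖) ^ 2 := by
        rw [mul_pow]; exact_mod_cast h1
      exact (pow_left_inj₀ (norm_nonneg _) (by positivity) two_ne_zero).mp h2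
    let D : H →L[ℂ] E := LinearMap.mkContinuous (U.toLinearMap ∘ₗ tmul (y 0)) ‖y 0‖ (by
      intro ζ
      simp only [LinearMap.comp_apply, ContinuousLinearMap.coe_coe]
      exact (hU _).trans (hn ζ).le)
    have hD : ∀ ζ, D ζ = U (tmul (y 0) ζ) := fun _ => rfl
    have hDn : ‖D‖ ≤ ‖y 0‖ := LinearMap.mkContinuous_norm_le _ (norm_nonneg _) _
    let C := adjoint D
    have hC : ∀ e, ‖C e‖ ≤ ‖y 0‖ * ‖e‖ := by
      intro e
      refine (C.le_opNorm e).trans ?_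
      have : ‖C‖ = ‖D‖ := LinearIsometryEquiv.norm_map _ _
      rw [this]
      gcongr
    have h1 : ∀ j, ⟪ξ j, ((List.ofFn fun i => A (x j i) (y i)).prod) ζ⟫ =
        ⟪C (tmul (x j 0) (ξ j)),
          ((List.ofFn fun i : Fin m => A (x j i.succ) (y i.succ)).prod) ζ⟫ := by
      intro j
      rw [List.ofFn_succ, List.prod_cons, ContinuousLinearMap.mul_apply, hA, adjoint_inner_left, hD]
    simp_rw [h1]
    refine (ih (fun j i => x j i.succ) (fun i => y i.succ) _).trans ?_
    have h2 := aux_contr _ (aux_psd m (fun j i => x j i.succ)) C ‖y 0‖ hC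
      (fun j => tmul (x j 0) (ξ j))
    simp only [Matrix.of_apply] at h2
    have h3 : ∑ j, ∑ k, (∏ i : Fin m, ⟪x j i.succ, x k i.succ⟫) *
        ⟪tmul (x j 0) (ξ j), tmul (x k 0) (ξ k)⟫ =
        ∑ j, ∑ k, (∏ i, ⟪x j i, x k i⟫) * ⟪ξ j, ξ k⟫ := by
      refine Finset.sum_congr rfl fun j _ => Finset.sum_congr rfl fun k _ => ?_
      rw [htmul, Fin.prod_univ_succ]; ring
    rw [h3] at h2
    refine (mul_le_mul_of_nonneg_right h2 (by positivity)).trans (le_of_eq ?_)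
    rw [Fin.prod_univ_succ (fun i => ‖y i‖ ^ 2)]
    ring

theorem aux_norm_tmul {h H E : Type*}
    [NormedAddCommGroup h] [InnerProductSpace ℂ h]
    [NormedAddCommGroup H] [InnerProductSpace ℂ H]
    [NormedAddCommGroup E] [InnerProductSpace ℂ E]
    (tmul : h →ₗ[ℂ] H →ₗ[ℂ] E)
    (htmul : ∀ (u v : h) (ξ ζ : H), ⟪tmul u ξ, tmul v ζ⟫ = ⟪u, v⟫ * ⟪ξ, ζ⟫) (u : h) (ζ : H) :
    ‖tmul u ζ‖ = ‖u‖ * ‖ζ‖ := by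
  have h1 := htmul u u ζ ζ
  rw [inner_self_eq_norm_sq_to_K, inner_self_eq_norm_sq_to_K, inner_self_eq_norm_sq_to_K] at h1
  have h2 : ‖tmul u ζ‖ ^ 2 = (‖u‖ * ‖ζ‖) ^ 2 := by
    rw [mul_pow]; exact_mod_cast h1
  exact (pow_left_inj₀ (norm_nonneg _) (by positivity) two_ne_zero).mp h2

/-- The ampliation is a contraction on product vectors. -/
theorem aux_ampl {h H E K F : Type*}
    [NormedAddCommGroup h] [InnerProductSpace ℂ h]
    [NormedAddCommGroup H] [InnerProductSpace ℂ H] [CompleteSpace H]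
    [NormedAddCommGroup E] [InnerProductSpace ℂ E] [CompleteSpace E]
    [NormedAddCommGroup K] [InnerProductSpace ℂ K]
    [NormedAddCommGroup F] [InnerProductSpace ℂ F]
    (tmul : h →ₗ[ℂ] H →ₗ[ℂ] E)
    (htmul : ∀ (u v : h) (ξ ζ : H), ⟪tmul u ξ, tmul v ζ⟫ = ⟪u, v⟫ * ⟪ξ, ζ⟫)
    (U : E →L[ℂ] E) (hU : ∀ e, ‖U e‖ ≤ ‖e‖)
    (A : h → h → (H →L[ℂ] H))
    (hA : ∀ (u v : h) (ξ₁ ξ₂ : H), ⟪ξ₁, A u v ξ₂⟫ = ⟪tmul u ξ₁, U (tmul v ξ₂)⟫)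
    (m : ℕ)
    (tmulm : (Fin m → h) → K)
    (htmulm : ∀ u v : Fin m → h, ⟪tmulm u, tmulm v⟫ = ∏ i, ⟪u i, v i⟫)
    (hdenseK : (Submodule.span ℂ (Set.range tmulm)).topologicalClosure = ⊤)
    (tmulF : K →ₗ[ℂ] H →ₗ[ℂ] F)
    (htmulF : ∀ (x y : K) (ξ ζ : H), ⟪tmulF x ξ, tmulF y ζ⟫ = ⟪x, y⟫ * ⟪ξ, ζ⟫)
    (hdenseF :
      (Submodule.span ℂ (Set.range fun p : K × H => tmulF p.1 p.2)).topologicalClosure = ⊤)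
    (Um : F →L[ℂ] F)
    (hUm : ∀ (x y : Fin m → h) (ξ ζ : H),
      ⟪tmulF (tmulm x) ξ, Um (tmulF (tmulm y) ζ)⟫
        = ⟪ξ, ((List.ofFn fun i => A (x i) (y i)).prod) ζ⟫)
    (y : Fin m → h) (ζ : H) :
    ‖Um (tmulF (tmulm y) ζ)‖ ≤ ‖tmulm y‖ * ‖ζ‖ := by
  set S : Set F := Set.range fun p : (Fin m → h) × H => tmulF (tmulm p.1) p.2 with hS
  have hSd : (Submodule.span ℂ S).topologicalClosure = ⊤ := by
    rw [eq_top_iff, ← hdenseF]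
    refine Submodule.topologicalClosure_minimal _ ?_
      (Submodule.isClosed_topologicalClosure _)
    rw [Submodule.span_le]
    rintro _ ⟨⟨a, ξ⟩, rfl⟩
    let R : K →L[ℂ] F := LinearMap.mkContinuous (tmulF.flip ξ) ‖ξ‖ (by
      intro a
      rw [LinearMap.flip_apply, aux_norm_tmul tmulF htmulF, mul_comm])
    have hR : ∀ a, R a = tmulF a ξ := fun _ => rfl
    have hle : (⊤ : Submodule ℂ K) ≤
        (Submodule.span ℂ S).topologicalClosure.comap (R : K →ₗ[ℂ] F) := by
      rw [← hdenseK]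
      refine Submodule.topologicalClosure_minimal _ ?_ ?_
      · rw [Submodule.span_le]
        rintro _ ⟨b, rfl⟩
        exact Submodule.le_topologicalClosure _ (Submodule.subset_span ⟨(b, ξ), rfl⟩)
      · exact (Submodule.isClosed_topologicalClosure _).preimage R.continuous
    exact hle (Submodule.mem_top (x := a))
  have hyn : ‖tmulm y‖ ^ 2 = ∏ i, ‖y i‖ ^ 2 := by
    have h1 := htmulm y y
    simp only [inner_self_eq_norm_sq_to_K] at h1
    exact_mod_cast h1
  set Z := Um (tmulF (tmulm y) ζ) with hZ
  set c := ‖tmulm y‖ * ‖ζ‖ with hc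
  have hspan : ∀ f ∈ Submodule.span ℂ S, ‖⟪f, Z⟫‖ ≤ ‖f‖ * c := by
    intro f hf
    obtain ⟨N, a, g, rfl⟩ := Submodule.mem_span_set'.mp hf
    choose p hp using fun j => (g j).2
    have e1 : ∑ j, a j • (g j : F) = ∑ j, tmulF (tmulm (p j).1) (a j • (p j).2) := by
      refine Finset.sum_congr rfl fun j _ => ?_
      rw [map_smul, ← hp j]
    rw [e1]
    have h1 := aux_key_s13 tmul htmul U hU A hA m (fun j => (p j).1) y (fun j => a j • (p j).2) ζ
    have h2 : ∑ j, ∑ k, (∏ i, ⟪(p j).1 i, (p k).1 i⟫) * ⟪a j • (p j).2, a k • (p k).2⟫ =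
        ⟪∑ j, tmulF (tmulm (p j).1) (a j • (p j).2), ∑ j, tmulF (tmulm (p j).1) (a j • (p j).2)⟫ := by
      simp only [sum_inner, inner_sum, htmulF, htmulm]
      rw [Finset.sum_comm]
    have n2 : ∀ w : F, (⟪w, w⟫ : ℂ).re = ‖w‖ ^ 2 := fun w => inner_self_eq_norm_sq (𝕜 := ℂ) w
    rw [h2, n2, ← hyn, ← mul_pow, ← mul_pow] at h1
    rw [sum_inner]
    simp_rw [hZ, hUm]
    exact (pow_le_pow_iff_left₀ (norm_nonneg _) (by positivity) two_ne_zero).mp h1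
  have hall : ∀ f : F, ‖⟪f, Z⟫‖ ≤ ‖f‖ * c := by
    intro f
    have hf : f ∈ closure (Submodule.span ℂ S : Set F) := by
      rw [← Submodule.topologicalClosure_coe, hSd]; trivial
    have hcl : IsClosed {f : F | ‖⟪f, Z⟫‖ ≤ ‖f‖ * c} :=
      isClosed_le (by fun_prop) (by fun_prop)
    exact closure_minimal (fun f hf => hspan f hf) hcl hf
  have h1 := hall Z
  rw [inner_self_eq_norm_sq_to_K] at h1
  by_cases h0 : ‖Z‖ = 0
  · rw [h0]; positivity
  · have hpos : 0 < ‖Z‖ := lt_of_le_of_ne (norm_nonneg _) (Ne.symm h0)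
    have h2 : ‖Z‖ * ‖Z‖ ≤ ‖Z‖ * c := by
      simpa [sq] using h1
    exact le_of_mul_le_mul_left h2 hpos

/-- Bessel inequality for slices. -/
theorem aux_bessel_s13 {H K F ι : Type*}
    [NormedAddCommGroup H] [InnerProductSpace ℂ H]
    [NormedAddCommGroup K] [InnerProductSpace ℂ K]
    [NormedAddCommGroup F] [InnerProductSpace ℂ F]
    (tmulF : K →ₗ[ℂ] H →ₗ[ℂ] F)
    (htmulF : ∀ (x y : K) (ξ ζ : H), ⟪tmulF x ξ, tmulF y ζ⟫ = ⟪x, y⟫ * ⟪ξ, ζ⟫)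
    (φ : ι → K) (hφ : Orthonormal ℂ φ) (f : F) (a : ι → H)
    (ha : ∀ k ξ, ⟪ξ, a k⟫ = ⟪tmulF (φ k) ξ, f⟫) (s : Finset ι) :
    ∑ k ∈ s, ‖a k‖ ^ 2 ≤ ‖f‖ ^ 2 := by
  classical
  set P := ∑ k ∈ s, tmulF (φ k) (a k) with hP
  have h1 : ⟪P, f⟫ = ((∑ k ∈ s, ‖a k‖ ^ 2 : ℝ) : ℂ) := by
    rw [hP, sum_inner]
    simp_rw [← ha, inner_self_eq_norm_sq_to_K]
    simp
  have h2 : ⟪P, P⟫ = ((∑ k ∈ s, ‖a k‖ ^ 2 : ℝ) : ℂ) := by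
    rw [hP, sum_inner]
    simp_rw [inner_sum, htmulF, orthonormal_iff_ite.mp hφ]
    push_cast
    refine Finset.sum_congr rfl fun k hk => ?_
    simp [hk, inner_self_eq_norm_sq_to_K]
  rw [inner_self_eq_norm_sq_to_K] at h2
  have h2' : ‖P‖ ^ 2 = ∑ k ∈ s, ‖a k‖ ^ 2 :=
    Complex.ofReal_injective (by rw [← h2]; simp)
  have h3 := norm_inner_le_norm (𝕜 := ℂ) P f
  rw [h1, Complex.norm_real, ← h2', Real.norm_of_nonneg (by positivity)] at h3
  rw [← h2']
  nlinarith [norm_nonneg P, norm_nonneg f, sq_nonneg (‖P‖ - ‖f‖)]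

theorem aux_half {H K F ι : Type*}
    [NormedAddCommGroup H] [InnerProductSpace ℂ H]
    [NormedAddCommGroup K] [InnerProductSpace ℂ K]
    [NormedAddCommGroup F] [InnerProductSpace ℂ F]
    (tmulF : K →ₗ[ℂ] H →ₗ[ℂ] F)
    (htmulF : ∀ (x y : K) (ξ ζ : H), ⟪tmulF x ξ, tmulF y ζ⟫ = ⟪x, y⟫ * ⟪ξ, ζ⟫)
    (Ω : H) (hΩ : ‖Ω‖ = 1)
    (V : F →L[ℂ] F) (op : K → K → (H →L[ℂ] H))
    (hop : ∀ (x y : K) (ξ₁ ξ₂ : H), ⟪ξ₁, op x y ξ₂⟫ = ⟪tmulF x ξ₁, V (tmulF y ξ₂)⟫)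
    (T : K →L[ℂ] K) (hT : ∀ φ ψ : K, ⟪φ, T ψ⟫ = ⟪Ω, op φ ψ Ω⟫)
    (φ : ι → K) (hφ : Orthonormal ℂ φ) (v : K)
    (hv : ‖V (tmulF v Ω)‖ ≤ ‖v‖) (s : Finset ι) :
    √(∑ k ∈ s, ‖op (φ k) v Ω‖ ^ 2) ≤ ‖v‖ ∧
    √(∑ k ∈ s, ‖⟪φ k, v⟫ • Ω‖ ^ 2) ≤ ‖v‖ ∧
    √(∑ k ∈ s, ‖op (φ k) v Ω - ⟪φ k, v⟫ • Ω‖ ^ 2) ≤ √2 * ‖v‖ * √‖T - 1‖ := by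
  have hvn : ‖tmulF v Ω‖ = ‖v‖ := by rw [aux_norm_tmul tmulF htmulF, hΩ, mul_one]
  have hb : ∀ k ξ, ⟪ξ, ⟪φ k, v⟫ • Ω⟫ = ⟪tmulF (φ k) ξ, tmulF v Ω⟫ := by
    intro k ξ
    rw [htmulF, inner_smul_right]
  have B1 := aux_bessel_s13 tmulF htmulF φ hφ (V (tmulF v Ω)) (fun k => op (φ k) v Ω)
    (fun k ξ => hop _ _ _ _) s
  have B2 := aux_bessel_s13 tmulF htmulF φ hφ (tmulF v Ω) (fun k => ⟪φ k, v⟫ • Ω) hb s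
  have B3 := aux_bessel_s13 tmulF htmulF φ hφ (V (tmulF v Ω) - tmulF v Ω)
    (fun k => op (φ k) v Ω - ⟪φ k, v⟫ • Ω)
    (fun k ξ => by rw [inner_sub_right, inner_sub_right, hb, hop]) s
  refine ⟨Real.sqrt_le_iff.mpr ⟨norm_nonneg _, B1.trans (by gcongr)⟩,
    Real.sqrt_le_iff.mpr ⟨norm_nonneg _, B2.trans (by rw [hvn])⟩,
    Real.sqrt_le_iff.mpr ⟨by positivity, B3.trans ?_⟩⟩
  have e1 := norm_sub_sq (𝕜 := ℂ) (V (tmulF v Ω)) (tmulF v Ω)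
  have e2 : ⟪tmulF v Ω, V (tmulF v Ω)⟫ = ⟪v, (T - 1) v⟫ + (‖v‖ ^ 2 : ℝ) := by
    rw [← hop, ← hT, ContinuousLinearMap.sub_apply, inner_sub_right,
      ContinuousLinearMap.one_apply, inner_self_eq_norm_sq_to_K]
    simp
  have e3 : ‖(⟪v, (T - 1) v⟫ : ℂ)‖ ≤ ‖v‖ ^ 2 * ‖T - 1‖ := by
    refine (norm_inner_le_norm _ _).trans ?_
    have := (T - 1).le_opNorm v
    nlinarith [norm_nonneg v]
  have e4 : RCLike.re (⟪V (tmulF v Ω), tmulF v Ω⟫ : ℂ) = (⟪v, (T - 1) v⟫ : ℂ).re + ‖v‖ ^ 2 := by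
    rw [inner_re_symm, e2]
    simp [← Complex.ofReal_pow]
  have e5 := (abs_le.mp (Complex.abs_re_le_norm (⟪v, (T - 1) v⟫ : ℂ))).1
  rw [e1, e4, hvn, mul_pow, mul_pow, Real.sq_sqrt (by norm_num), Real.sq_sqrt (norm_nonneg _)]
  have e6 : ‖V (tmulF v Ω)‖ ^ 2 ≤ ‖v‖ ^ 2 := by gcongr
  nlinarith

theorem stmt13
    {h H E Km Kn Fm Fn : Type*} {ι : Type*}
    [NormedAddCommGroup h] [InnerProductSpace ℂ h] [CompleteSpace h]
    [TopologicalSpace.SeparableSpace h]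
    [NormedAddCommGroup H] [InnerProductSpace ℂ H] [CompleteSpace H]
    [TopologicalSpace.SeparableSpace H]
    [NormedAddCommGroup E] [InnerProductSpace ℂ E] [CompleteSpace E]
    [NormedAddCommGroup Km] [InnerProductSpace ℂ Km] [CompleteSpace Km]
    [NormedAddCommGroup Kn] [InnerProductSpace ℂ Kn] [CompleteSpace Kn]
    [NormedAddCommGroup Fm] [InnerProductSpace ℂ Fm] [CompleteSpace Fm]
    [NormedAddCommGroup Fn] [InnerProductSpace ℂ Fn] [CompleteSpace Fn]
    (tmul : h →ₗ[ℂ] H →ₗ[ℂ] E)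
    (htmul : ∀ (u v : h) (ξ ζ : H), ⟪tmul u ξ, tmul v ζ⟫ = ⟪u, v⟫ * ⟪ξ, ζ⟫)
    (hdenseE : (Submodule.span ℂ (Set.range fun p : h × H => tmul p.1 p.2)).topologicalClosure = ⊤)
    (opAtE : (E →L[ℂ] E) → h → h → (H →L[ℂ] H))
    (hopAtE : ∀ (T : E →L[ℂ] E) (u v : h) (ξ₁ ξ₂ : H),
      ⟪ξ₁, opAtE T u v ξ₂⟫ = ⟪tmul u ξ₁, T (tmul v ξ₂)⟫)
    (Ω : H) (hΩ : ‖Ω‖ = 1)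
    (U : ℝ → (E →L[ℂ] E))
    (hUunitary : ∀ t : ℝ, 0 ≤ t → adjoint (U t) * U t = 1 ∧ U t * adjoint (U t) = 1)
    (m n : ℕ) (hm : 1 ≤ m) (hn : 1 ≤ n)
    (tmulm : (Fin m → h) → Km)
    (htmulm : ∀ u v : Fin m → h, ⟪tmulm u, tmulm v⟫ = ∏ i, ⟪u i, v i⟫)
    (hdenseKm : (Submodule.span ℂ (Set.range tmulm)).topologicalClosure = ⊤)
    (tmuln : (Fin n → h) → Kn)
    (htmuln : ∀ u v : Fin n → h, ⟪tmuln u, tmuln v⟫ = ∏ i, ⟪u i, v i⟫)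
    (hdenseKn : (Submodule.span ℂ (Set.range tmuln)).topologicalClosure = ⊤)
    (tmulFm : Km →ₗ[ℂ] H →ₗ[ℂ] Fm)
    (htmulFm : ∀ (x y : Km) (ξ ζ : H), ⟪tmulFm x ξ, tmulFm y ζ⟫ = ⟪x, y⟫ * ⟪ξ, ζ⟫)
    (hdenseFm :
      (Submodule.span ℂ (Set.range fun p : Km × H => tmulFm p.1 p.2)).topologicalClosure = ⊤)
    (tmulFn : Kn →ₗ[ℂ] H →ₗ[ℂ] Fn)
    (htmulFn : ∀ (x y : Kn) (ξ ζ : H), ⟪tmulFn x ξ, tmulFn y ζ⟫ = ⟪x, y⟫ * ⟪ξ, ζ⟫)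
    (hdenseFn :
      (Submodule.span ℂ (Set.range fun p : Kn × H => tmulFn p.1 p.2)).topologicalClosure = ⊤)
    (opAtFm : (Fm →L[ℂ] Fm) → Km → Km → (H →L[ℂ] H))
    (hopAtFm : ∀ (T : Fm →L[ℂ] Fm) (x y : Km) (ξ₁ ξ₂ : H),
      ⟪ξ₁, opAtFm T x y ξ₂⟫ = ⟪tmulFm x ξ₁, T (tmulFm y ξ₂)⟫)
    (opAtFn : (Fn →L[ℂ] Fn) → Kn → Kn → (H →L[ℂ] H))
    (hopAtFn : ∀ (T : Fn →L[ℂ] Fn) (x y : Kn) (ξ₁ ξ₂ : H),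
      ⟪ξ₁, opAtFn T x y ξ₂⟫ = ⟪tmulFn x ξ₁, T (tmulFn y ξ₂)⟫)
    -- the ampliations U_t^{(m)} and U_t^{(n)}
    (Um : ℝ → (Fm →L[ℂ] Fm))
    (hUm : ∀ (t : ℝ) (x y : Fin m → h) (ξ ζ : H),
      ⟪tmulFm (tmulm x) ξ, Um t (tmulFm (tmulm y) ζ)⟫
        = ⟪ξ, ((List.ofFn fun i => opAtE (U t) (x i) (y i)).prod) ζ⟫)
    (Un : ℝ → (Fn →L[ℂ] Fn))
    (hUn : ∀ (t : ℝ) (x y : Fin n → h) (ξ ζ : H),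
      ⟪tmulFn (tmuln x) ξ, Un t (tmulFn (tmuln y) ζ)⟫
        = ⟪ξ, ((List.ofFn fun i => opAtE (U t) (x i) (y i)).prod) ζ⟫)
    -- the expectation semigroups T_t^{(m)} and T_t^{(n)}
    (Tm : ℝ → (Km →L[ℂ] Km))
    (hTm : ∀ (t : ℝ) (φ ψ : Km), ⟪φ, Tm t ψ⟫ = ⟪Ω, (opAtFm (Um t) φ ψ) Ω⟫)
    (Tn : ℝ → (Kn →L[ℂ] Kn))
    (hTn : ∀ (t : ℝ) (φ ψ : Kn), ⟪φ, Tn t ψ⟫ = ⟪Ω, (opAtFn (Un t) φ ψ) Ω⟫)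
    (φm : HilbertBasis ι ℂ Km) (φn : HilbertBasis ι ℂ Kn)
    (v : Fin m → h) (w : Fin n → h)
    (t : ℝ) (ht : 0 ≤ t) :
    Summable (fun k : ι =>
      ‖⟪(opAtFm (Um t) (φm k) (tmulm v)) Ω, (opAtFn (Un t) (φn k) (tmuln w)) Ω⟫
        - (starRingEnd ℂ) ⟪φm k, tmulm v⟫ * ⟪φn k, tmuln w⟫‖) ∧
    (∑' k : ι,
      ‖⟪(opAtFm (Um t) (φm k) (tmulm v)) Ω, (opAtFn (Un t) (φn k) (tmuln w)) Ω⟫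
        - (starRingEnd ℂ) ⟪φm k, tmulm v⟫ * ⟪φn k, tmuln w⟫‖)
      ≤ Real.sqrt 2 * ‖tmulm v‖ * ‖tmuln w‖ *
          (Real.sqrt ‖Tm t - 1‖ + Real.sqrt ‖Tn t - 1‖) := by
  have hU : ∀ e, ‖U t e‖ ≤ ‖e‖ := by
    intro e
    have h1 : (⟪U t e, U t e⟫ : ℂ) = ⟪e, e⟫ := by
      rw [← adjoint_inner_left, ← ContinuousLinearMap.mul_apply, (hUunitary t ht).1,
        ContinuousLinearMap.one_apply]
    rw [inner_self_eq_norm_sq_to_K, inner_self_eq_norm_sq_to_K] at h1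
    have h2 : ‖U t e‖ ^ 2 = ‖e‖ ^ 2 := by exact_mod_cast h1
    exact ((pow_left_inj₀ (norm_nonneg _) (norm_nonneg _) two_ne_zero).mp h2).le
  have hVm := aux_ampl tmul htmul (U t) hU (opAtE (U t)) (hopAtE (U t)) m tmulm htmulm hdenseKm
    tmulFm htmulFm hdenseFm (Um t) (hUm t) v Ω
  have hVn := aux_ampl tmul htmul (U t) hU (opAtE (U t)) (hopAtE (U t)) n tmuln htmuln hdenseKn
    tmulFn htmulFn hdenseFn (Un t) (hUn t) w Ω
  rw [hΩ, mul_one] at hVm hVn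
  have Hm := aux_half tmulFm htmulFm Ω hΩ (Um t) (opAtFm (Um t)) (hopAtFm (Um t)) (Tm t) (hTm t)
    φm φm.orthonormal (tmulm v) hVm
  have Hn := aux_half tmulFn htmulFn Ω hΩ (Un t) (opAtFn (Un t)) (hopAtFn (Un t)) (Tn t) (hTn t)
    φn φn.orthonormal (tmuln w) hVn
  set a := fun k => opAtFm (Um t) (φm k) (tmulm v) Ω with ha
  set a' := fun k => opAtFn (Un t) (φn k) (tmuln w) Ω with ha'
  have main : ∀ s : Finset ι, ∑ k ∈ s,
      ‖⟪a k, a' k⟫ - (starRingEnd ℂ) ⟪φm k, tmulm v⟫ * ⟪φn k, tmuln w⟫‖ ≤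
      Real.sqrt 2 * ‖tmulm v‖ * ‖tmuln w‖ *
          (Real.sqrt ‖Tm t - 1‖ + Real.sqrt ‖Tn t - 1‖) := by
    intro s
    obtain ⟨m1, m2, m3⟩ := Hm s
    obtain ⟨n1, n2, n3⟩ := Hn s
    have hterm : ∀ k ∈ s,
        ‖⟪a k, a' k⟫ - (starRingEnd ℂ) ⟪φm k, tmulm v⟫ * ⟪φn k, tmuln w⟫‖ ≤
        ‖a k - ⟪φm k, tmulm v⟫ • Ω‖ * ‖a' k‖ +
        ‖⟪φm k, tmulm v⟫ • Ω‖ * ‖a' k - ⟪φn k, tmuln w⟫ • Ω‖ := by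
      intro k _
      have e : ⟪a k, a' k⟫ - (starRingEnd ℂ) ⟪φm k, tmulm v⟫ * ⟪φn k, tmuln w⟫ =
          ⟪a k - ⟪φm k, tmulm v⟫ • Ω, a' k⟫ +
          ⟪⟪φm k, tmulm v⟫ • Ω, a' k - ⟪φn k, tmuln w⟫ • Ω⟫ := by
        rw [inner_sub_left, inner_sub_right, inner_smul_left _ (⟪φn k, tmuln w⟫ • Ω),
          inner_smul_right, inner_self_eq_norm_sq_to_K, hΩ]
        simp
      rw [e]
      exact (norm_add_le _ _).trans (add_le_add (norm_inner_le_norm _ _) (norm_inner_le_norm _ _))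
    refine (Finset.sum_le_sum hterm).trans ?_
    rw [Finset.sum_add_distrib]
    have c1 := Real.sum_mul_le_sqrt_mul_sqrt s (fun k => ‖a k - ⟪φm k, tmulm v⟫ • Ω‖)
      (fun k => ‖a' k‖)
    have c2 := Real.sum_mul_le_sqrt_mul_sqrt s (fun k => ‖⟪φm k, tmulm v⟫ • Ω‖)
      (fun k => ‖a' k - ⟪φn k, tmuln w⟫ • Ω‖)
    have d1 := c1.trans (mul_le_mul m3 n1 (Real.sqrt_nonneg _) (by positivity))
    have d2 := c2.trans (mul_le_mul m2 n3 (Real.sqrt_nonneg _) (by positivity))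
    refine (add_le_add d1 d2).trans (le_of_eq ?_)
    ring
  have hs := summable_of_sum_le (fun _ => norm_nonneg _) main
  exact ⟨hs, hs.tsum_le_of_sum_le main⟩
end

section
/- Under Assumptions A, B and C, for all u, v ∈ h, every n ≥ 1, all product vectors p, w ∈ h^{⊗n} and every ε ∈ {0,1}ⁿ: lim_{t→0} (1/t)·⟨(U_t + U_t* − 2)(u,v)Ω, (U_t^{(ε)} − 1)(p,w)Ω⟩ = 0. (In the Kolmogorov space of the kernel K this says η(u,v,1) = −η(u,v,0).) -/
open scoped ComplexInnerProductSpace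
open ContinuousLinearMap Filter
open scoped ComplexOrder

lemma aux_growth {A : Type*} [NormedRing A] [NormedAlgebra ℝ A] (T : ℝ → A)
    (hmul : ∀ s t : ℝ, 0 < s → 0 < t → T (s + t) = T s * T t)
    (τ : ℝ) (hτ : 0 < τ) (hT : ∀ t, 0 < t → t < τ → ‖T t - 1‖ ≤ 1 / 2) :
    ∀ t, 0 < t → t < τ / 2 → ‖T t - 1‖ ≤ (2 / τ) * t := by
  intro t ht htτ
  have hpow : ∀ k : ℕ, T ((k + 1 : ℕ) * t) = T t ^ (k + 1) := by
    intro k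
    induction k with
    | zero => simp
    | succ k ih =>
      rw [pow_succ, ← ih, ← hmul _ _ (by positivity) ht]
      congr 1
      push_cast
      ring
  have hk : ∀ k : ℕ, (k : ℝ) * t < τ → ‖T t ^ k - 1‖ ≤ 1 / 2 := by
    intro k hk
    cases k with
    | zero => simp
    | succ k => rw [← hpow]; exact hT _ (by positivity) hk
  set n := ⌈τ / (2 * t)⌉₊ with hn
  have h1 : τ / (2 * t) ≤ n := Nat.le_ceil _
  have h2 : (n : ℝ) < τ / (2 * t) + 1 := Nat.ceil_lt_add_one (by positivity)
  have hnt : (n : ℝ) * t < τ := by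
    have : (τ / (2 * t) + 1) * t = τ / 2 + t := by field_simp
    nlinarith
  have hid : (n : ℝ) • (T t - 1) =
      (T t ^ n - 1) - (T t - 1) * ∑ k ∈ Finset.range n, (T t ^ k - 1) := by
    rw [Finset.sum_sub_distrib, mul_sub, mul_geom_sum]
    simp [Nat.cast_smul_eq_nsmul, nsmul_eq_mul]
    exact (Nat.cast_commute n _).eq
  have hs : ‖∑ k ∈ Finset.range n, (T t ^ k - 1)‖ ≤ n * (1 / 2) := by
    refine (norm_sum_le _ _).trans ?_
    refine (Finset.sum_le_card_nsmul _ _ (1 / 2) ?_).trans (by simp)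
    intro k hkn
    apply hk
    have : (k : ℝ) ≤ n := by exact_mod_cast (Finset.mem_range.1 hkn).le
    nlinarith
  have hb : (n : ℝ) * ‖T t - 1‖ ≤ 1 / 2 + ‖T t - 1‖ * (n * (1 / 2)) := by
    calc (n : ℝ) * ‖T t - 1‖ = ‖(n : ℝ) • (T t - 1)‖ := by rw [norm_smul]; simp
      _ ≤ _ := by
        rw [hid]
        refine (norm_sub_le _ _).trans (add_le_add (hk n hnt) ((norm_mul_le _ _).trans ?_))
        gcongr
  have hb2 : (n : ℝ) * ‖T t - 1‖ ≤ 1 := by linarith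
  have hb3 : τ / (2 * t) * ‖T t - 1‖ ≤ 1 :=
    (mul_le_mul_of_nonneg_right h1 (norm_nonneg _)).trans hb2
  have : ‖T t - 1‖ = (2 / τ) * t * (τ / (2 * t) * ‖T t - 1‖) := by field_simp
  rw [this]
  calc _ ≤ (2 / τ) * t * 1 := by gcongr
    _ = _ := by ring

lemma aux_mul {F : Type*} [NormedAddCommGroup F] [NormedSpace ℂ F] (A B : F →L[ℂ] F) (x : F) :
    (A * B) x = A (B x) := rfl

lemma aux_one {F : Type*} [NormedAddCommGroup F] [NormedSpace ℂ F] (x : F) :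
    (1 : F →L[ℂ] F) x = x := rfl

set_option linter.unusedSectionVars false

section
variable {h H E : Type*}
    [NormedAddCommGroup h] [InnerProductSpace ℂ h] [CompleteSpace h]
    [NormedAddCommGroup H] [InnerProductSpace ℂ H] [CompleteSpace H]
    [NormedAddCommGroup E] [InnerProductSpace ℂ E] [CompleteSpace E]

lemma aux_norm (tmul : h →ₗ[ℂ] H →ₗ[ℂ] E)
    (htmul : ∀ (u v : h) (ξ ζ : H), ⟪tmul u ξ, tmul v ζ⟫ = ⟪u, v⟫ * ⟪ξ, ζ⟫)
    (u : h) (ξ : H) : ‖tmul u ξ‖ = ‖u‖ * ‖ξ‖ := by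
  have := htmul u u ξ ξ
  simp only [inner_self_eq_norm_sq_to_K] at this
  have h2 : ‖tmul u ξ‖ ^ 2 = (‖u‖ * ‖ξ‖) ^ 2 := by
    rw [mul_pow]; exact_mod_cast this
  exact (sq_eq_sq₀ (by positivity) (by positivity)).1 h2

lemma aux_parseval (tmul : h →ₗ[ℂ] H →ₗ[ℂ] E)
    (htmul : ∀ (u v : h) (ξ ζ : H), ⟪tmul u ξ, tmul v ζ⟫ = ⟪u, v⟫ * ⟪ξ, ζ⟫)
    (hdenseE : (Submodule.span ℂ (Set.range fun p : h × H => tmul p.1 p.2)).topologicalClosure = ⊤)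
    (x y : E) (f g : h → H) (hf : ∀ b ξ, ⟪ξ, f b⟫ = ⟪tmul b ξ, x⟫)
    (hg : ∀ b ξ, ⟪ξ, g b⟫ = ⟪tmul b ξ, y⟫)
    (p q : h) (hpq : ∀ b, ⟪f b, g b⟫ = ⟪p, b⟫ * ⟪b, q⟫) : ⟪x, y⟫ = ⟪p, q⟫ := by
  obtain ⟨S, e, he⟩ := exists_hilbertBasis ℂ h
  let V : S → H →ₗᵢ[ℂ] E := fun j => 
    { toLinearMap := tmul (e j)
      norm_map' := fun ξ => by simp [aux_norm tmul htmul, e.orthonormal.1 j] }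
  have hV : ∀ j ξ, V j ξ = tmul (e j) ξ := fun _ _ => rfl
  have hO : OrthogonalFamily ℂ (fun _ : S => H) V := by
    intro i j hij ξ ζ
    simp [hV, htmul, e.orthonormal.2 hij]
  have hS : IsHilbertSum ℂ (fun _ : S => H) V := by
    refine IsHilbertSum.mk hO ?_
    rw [← hdenseE]
    refine Submodule.topologicalClosure_minimal _ ?_ (Submodule.isClosed_topologicalClosure _)
    rw [Submodule.span_le]
    rintro _ ⟨⟨u, ξ⟩, rfl⟩
    let R : h →L[ℂ] E := (tmul.flip ξ).mkContinuous ‖ξ‖ (fun u => by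
      simp [aux_norm tmul htmul, mul_comm])
    have hR : HasSum (fun j => R (e.repr u j • e j)) (R u) := (e.hasSum_repr u).mapL R
    refine Submodule.isClosed_topologicalClosure _ |>.mem_of_tendsto hR (Eventually.of_forall ?_)
    intro s
    refine Submodule.sum_mem _ (fun j _ => ?_)
    rw [map_smul]
    refine Submodule.smul_mem _ _ (Submodule.le_topologicalClosure _ ?_)
    exact Submodule.mem_iSup_of_mem j ⟨ξ, rfl⟩
  have hc : ∀ (z : E) (k : h → H) (hk : ∀ b ξ, ⟪ξ, k b⟫ = ⟪tmul b ξ, z⟫) (j : S),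
      hS.linearIsometryEquiv z j = k (e j) := by
    intro z k hk j
    refine ext_inner_left ℂ fun ξ => ?_
    classical
    rw [hk, ← hV, ← hS.linearIsometryEquiv_symm_apply_single,
      LinearIsometryEquiv.inner_map_eq_flip, LinearIsometryEquiv.symm_symm,
      lp.inner_single_left]
  have h1 := lp.hasSum_inner (𝕜 := ℂ) (hS.linearIsometryEquiv x) (hS.linearIsometryEquiv y)
  rw [LinearIsometryEquiv.inner_map_map] at h1
  simp only [hc x f hf, hc y g hg, hpq] at h1
  exact h1.unique (e.hasSum_inner_mul_inner p q)

lemma aux_adj (tmul : h →ₗ[ℂ] H →ₗ[ℂ] E)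
    (opAtE : (E →L[ℂ] E) → h → h → (H →L[ℂ] H))
    (hopAtE : ∀ (T : E →L[ℂ] E) (u v : h) (ξ₁ ξ₂ : H),
      ⟪ξ₁, opAtE T u v ξ₂⟫ = ⟪tmul u ξ₁, T (tmul v ξ₂)⟫)
    (S : E →L[ℂ] E) (u b : h) (ξ ζ : H) :
    ⟪opAtE (adjoint S) b u ξ, ζ⟫ = ⟪ξ, opAtE S u b ζ⟫ := by
  rw [← inner_conj_symm, hopAtE, hopAtE, inner_conj_symm, adjoint_inner_left]

lemma aux_opnorm (tmul : h →ₗ[ℂ] H →ₗ[ℂ] E)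
    (htmul : ∀ (u v : h) (ξ ζ : H), ⟪tmul u ξ, tmul v ζ⟫ = ⟪u, v⟫ * ⟪ξ, ζ⟫)
    (opAtE : (E →L[ℂ] E) → h → h → (H →L[ℂ] H))
    (hopAtE : ∀ (T : E →L[ℂ] E) (u v : h) (ξ₁ ξ₂ : H),
      ⟪ξ₁, opAtE T u v ξ₂⟫ = ⟪tmul u ξ₁, T (tmul v ξ₂)⟫)
    (S : E →L[ℂ] E) (u v : h) (ξ : H) :
    ‖opAtE S u v ξ‖ ≤ ‖u‖ * ‖S (tmul v ξ)‖ := by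
  have h1 : ‖opAtE S u v ξ‖ * ‖opAtE S u v ξ‖ ≤
      ‖opAtE S u v ξ‖ * (‖u‖ * ‖S (tmul v ξ)‖) := by
    calc _ = ‖⟪opAtE S u v ξ, opAtE S u v ξ⟫‖ := by
          rw [inner_self_eq_norm_sq_to_K]; simp [sq]
      _ ≤ ‖tmul u (opAtE S u v ξ)‖ * ‖S (tmul v ξ)‖ := by
          rw [hopAtE]; exact norm_inner_le_norm _ _
      _ = _ := by rw [aux_norm tmul htmul]; ring
  rcases (norm_nonneg (opAtE S u v ξ)).eq_or_lt with h0 | h0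
  · rw [← h0]; positivity
  · exact le_of_mul_le_mul_left h1 h0

lemma aux_normsq (S : E →L[ℂ] E) (hS : adjoint S * S = 1) (x : E) :
    ‖(S - 1) x‖ ^ 2 = - 2 * (⟪x, (S - 1) x⟫).re := by
  have h1 : ‖S x‖ ^ 2 = ‖x‖ ^ 2 := by
    have : ⟪S x, S x⟫ = ⟪x, x⟫ := by
      rw [← adjoint_inner_right, ← aux_mul, hS]; rfl
    rw [inner_self_eq_norm_sq_to_K, inner_self_eq_norm_sq_to_K] at this
    exact_mod_cast this
  have h2 := norm_sub_sq (𝕜 := ℂ) (S x) x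
  have h3 : (⟪x, x⟫ : ℂ).re = ‖x‖ ^ 2 := by
    rw [inner_self_eq_norm_sq_to_K]; norm_cast
  have h4 : (⟪S x, x⟫ : ℂ).re = (⟪x, S x⟫ : ℂ).re := by
    rw [← inner_conj_symm, Complex.conj_re]
  simp only [sub_apply, aux_one, inner_sub_right, Complex.sub_re]
  rw [h2, h1, h3]
  simp only [RCLike.re_to_complex, h4]
  ring

lemma aux_rate
    (tmul : h →ₗ[ℂ] H →ₗ[ℂ] E)
    (htmul : ∀ (u v : h) (ξ ζ : H), ⟪tmul u ξ, tmul v ζ⟫ = ⟪u, v⟫ * ⟪ξ, ζ⟫)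
    (hdenseE : (Submodule.span ℂ (Set.range fun p : h × H => tmul p.1 p.2)).topologicalClosure = ⊤)
    (opAtE : (E →L[ℂ] E) → h → h → (H →L[ℂ] H))
    (hopAtE : ∀ (T : E →L[ℂ] E) (u v : h) (ξ₁ ξ₂ : H),
      ⟪ξ₁, opAtE T u v ξ₂⟫ = ⟪tmul u ξ₁, T (tmul v ξ₂)⟫)
    (Ω : H) (hΩ : ‖Ω‖ = 1)
    (U : ℝ → ℝ → (E →L[ℂ] E))
    (hUunitary : ∀ s t : ℝ, 0 ≤ s → s ≤ t →
      adjoint (U s t) * U s t = 1 ∧ U s t * adjoint (U s t) = 1)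
    (hA1 : ∀ r s t : ℝ, 0 ≤ r → r ≤ s → s ≤ t → U r s * U s t = U r t)
    (hA2 : ∀ s t : ℝ, 0 ≤ s → s ≤ t → ∀ u v p w : h,
        ⟪Ω, opAtE (U 0 s) u v (opAtE (U s t) p w Ω)⟫
          = ⟪Ω, opAtE (U 0 s) u v Ω⟫ * ⟪Ω, opAtE (U s t) p w Ω⟫)
    (hA3 : ∀ (s t : ℝ), 0 ≤ s → s ≤ t → ∀ u v : h,
      ⟪Ω, opAtE (U s t) u v Ω⟫ = ⟪Ω, opAtE (U 0 (t - s)) u v Ω⟫)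
    (hB : ∀ δ : ℝ, 0 < δ → ∃ τ : ℝ, 0 < τ ∧ ∀ t : ℝ, 0 < t → t < τ →
      ∀ u v : h, ‖u‖ = 1 → ‖v‖ = 1 →
        ‖⟪Ω, (opAtE (U 0 t - 1) u v) Ω⟫‖ < δ) :
    ∃ C τ : ℝ, 0 < C ∧ 0 < τ ∧ ∀ t, 0 < t → t < τ → ∀ (w : h) (ε : Bool),
      ‖((if ε then adjoint (U 0 t) else U 0 t) - 1) (tmul w Ω)‖ ^ 2 ≤ C * t * ‖w‖ ^ 2 := by
  let J : h →L[ℂ] E := (tmul.flip Ω).mkContinuous 1 (fun u => by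
      simp [aux_norm tmul htmul, hΩ])
  have hJ : ∀ u, J u = tmul u Ω := fun _ => rfl
  have hJJ : ∀ u v : h, ⟪J u, J v⟫ = ⟪u, v⟫ := by
    intro u v
    rw [hJ, hJ, htmul, inner_self_eq_norm_sq_to_K, hΩ]; simp
  let T : ℝ → h →L[ℂ] h := fun t => (adjoint J) ∘L (U 0 t) ∘L J
  have hT : ∀ t a b, ⟪a, T t b⟫ = ⟪J a, U 0 t (J b)⟫ := by
    intro t a b
    simp only [T, comp_apply, adjoint_inner_right]
  have hT1 : ∀ t a b, ⟪a, (T t - 1) b⟫ = ⟪J a, (U 0 t - 1) (J b)⟫ := by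
    intro t a b
    simp only [sub_apply, aux_one, inner_sub_right, hT, hJJ]
  have hmul : ∀ s t : ℝ, 0 < s → 0 < t → T (s + t) = T s * T t := by
    intro s t hs ht
    ext v
    refine ext_inner_left ℂ fun u => ?_
    rw [hT, ← hA1 0 s (s + t) le_rfl hs.le (by linarith), aux_mul, aux_mul,
      ← adjoint_inner_left (U 0 s), ← adjoint_inner_left (T s)]
    refine aux_parseval tmul htmul hdenseE _ _ (fun b => opAtE (adjoint (U 0 s)) b u Ω)
      (fun b => opAtE (U s (s + t)) b v Ω) (fun b ξ => hopAtE _ _ _ _ _)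
      (fun b ξ => hopAtE _ _ _ _ _) _ _ ?_
    intro b
    rw [aux_adj tmul opAtE hopAtE, hA2 s (s + t) hs.le (by linarith),
      hA3 s (s + t) hs.le (by linarith), hopAtE, hopAtE, adjoint_inner_left, hT, hT,
      add_sub_cancel_left]
    rfl
  obtain ⟨τ, hτ, hτB⟩ := hB (1 / 2) (by norm_num)
  have hsmall : ∀ t, 0 < t → t < τ → ‖T t - 1‖ ≤ 1 / 2 := by
    intro t ht htτ
    refine opNorm_le_of_re_inner_le (𝕜 := ℂ) (by norm_num) fun x y hx hy => ?_
    refine (RCLike.re_le_norm _).trans ?_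
    have h1 := (hτB t ht htτ y x hy hx).le
    rwa [hopAtE, ← hJ, ← hJ, ← hT1, norm_inner_symm] at h1
  have hg := aux_growth T hmul τ hτ hsmall
  have hre : ∀ t, 0 < t → t < τ / 2 → ∀ w : h,
      - 2 * (⟪J w, (U 0 t - 1) (J w)⟫).re ≤ 4 / τ * t * ‖w‖ ^ 2 := by
    intro t ht htτ w
    rw [← hT1]
    have h1 : -(⟪w, (T t - 1) w⟫).re ≤ ‖⟪w, (T t - 1) w⟫‖ :=
      (neg_le_abs _).trans (Complex.abs_re_le_norm _)
    have h2 : ‖⟪w, (T t - 1) w⟫‖ ≤ ‖w‖ * (2 / τ * t * ‖w‖) :=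
      (norm_inner_le_norm _ _).trans (mul_le_mul_of_nonneg_left
        ((le_opNorm _ _).trans (mul_le_mul_of_nonneg_right (hg t ht htτ) (norm_nonneg _)))
        (norm_nonneg _))
    have h3 : 4 / τ * t * ‖w‖ ^ 2 = 2 * (‖w‖ * (2 / τ * t * ‖w‖)) := by ring
    linarith
  refine ⟨4 / τ, τ / 2, by positivity, by positivity, fun t ht htτ w ε => ?_⟩
  have hu := hUunitary 0 t le_rfl ht.le
  cases ε with
  | false =>
    simp only [Bool.false_eq_true, if_false]
    rw [aux_normsq _ hu.1]
    exact hre t ht htτ w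
  | true =>
    simp only [if_true]
    rw [aux_normsq _ (by rw [adjoint_adjoint]; exact hu.2)]
    refine le_trans (le_of_eq ?_) (hre t ht htτ w)
    congr 1
    simp only [sub_apply, aux_one, inner_sub_right, Complex.sub_re, hJ]
    rw [adjoint_inner_right, ← inner_conj_symm, Complex.conj_re]

lemma aux_prod
    (tmul : h →ₗ[ℂ] H →ₗ[ℂ] E)
    (htmul : ∀ (u v : h) (ξ ζ : H), ⟪tmul u ξ, tmul v ζ⟫ = ⟪u, v⟫ * ⟪ξ, ζ⟫)
    (opAtE : (E →L[ℂ] E) → h → h → (H →L[ℂ] H))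
    (hopAtE : ∀ (T : E →L[ℂ] E) (u v : h) (ξ₁ ξ₂ : H),
      ⟪ξ₁, opAtE T u v ξ₂⟫ = ⟪tmul u ξ₁, T (tmul v ξ₂)⟫)
    (Ω : H) (C τ : ℝ) (hC : 0 < C) (V : ℝ → Bool → (E →L[ℂ] E))
    (hV1 : ∀ t, 0 < t → ∀ ε x, ‖V t ε x‖ ≤ ‖x‖)
    (hV : ∀ t, 0 < t → t < τ → ∀ (w : h) (ε : Bool),
      ‖(V t ε - 1) (tmul w Ω)‖ ^ 2 ≤ C * t * ‖w‖ ^ 2) :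
    ∀ (n : ℕ) (p w : Fin n → h) (ε : Fin n → Bool), ∃ K : ℝ, 0 ≤ K ∧ ∀ t, 0 < t → t < τ →
      ‖((List.ofFn fun k => opAtE (V t (ε k)) (p k) (w k)).prod
            - (∏ k, ⟪p k, w k⟫) • (1 : H →L[ℂ] H)) Ω‖ ≤ K * √t := by
  intro n
  induction n with
  | zero => intro p w ε; exact ⟨0, le_rfl, fun t _ _ => by simp⟩
  | succ n ih =>
    intro p w ε
    obtain ⟨K, hK, hKt⟩ := ih (fun k => p k.succ) (fun k => w k.succ) (fun k => ε k.succ)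
    set c : ℂ := ∏ k : Fin n, ⟪p k.succ, w k.succ⟫ with hc
    refine ⟨‖p 0‖ * ‖w 0‖ * K + ‖c‖ * (‖p 0‖ * (√C * ‖w 0‖)), by positivity, ?_⟩
    intro t ht htτ
    rw [List.ofFn_succ, List.prod_cons, Fin.prod_univ_succ, ← hc]
    set P := (List.ofFn fun k : Fin n => opAtE (V t (ε k.succ)) (p k.succ) (w k.succ)).prod with hP
    set A := opAtE (V t (ε 0)) (p 0) (w 0) with hA
    have e1 : (A * P - (⟪p 0, w 0⟫ * c) • (1 : H →L[ℂ] H)) Ω =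
        A ((P - c • (1 : H →L[ℂ] H)) Ω) + c • opAtE (V t (ε 0) - 1) (p 0) (w 0) Ω := by
      have e2 : opAtE (V t (ε 0) - 1) (p 0) (w 0) Ω = A Ω - ⟪p 0, w 0⟫ • Ω := by
        refine ext_inner_left ℂ fun ξ => ?_
        simp only [hopAtE, hA, inner_sub_right, sub_apply, aux_one, inner_smul_right, htmul]
      rw [e2]
      simp only [sub_apply, aux_mul, smul_apply, aux_one, map_sub, map_smul, smul_sub,
        smul_smul]
      rw [mul_comm c]
      abel
    rw [e1]
    have b1 : ‖A ((P - c • (1 : H →L[ℂ] H)) Ω)‖ ≤ ‖p 0‖ * (‖w 0‖ * (K * √t)) := by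
      refine (aux_opnorm tmul htmul opAtE hopAtE _ _ _ _).trans ?_
      gcongr
      refine (hV1 t ht _ _).trans ?_
      rw [aux_norm tmul htmul]
      gcongr
      exact hKt t ht htτ
    have b2 : ‖opAtE (V t (ε 0) - 1) (p 0) (w 0) Ω‖ ≤ ‖p 0‖ * (√C * √t * ‖w 0‖) := by
      refine (aux_opnorm tmul htmul opAtE hopAtE _ _ _ _).trans ?_
      gcongr
      refine abs_le_of_sq_le_sq' ?_ (by positivity) |>.2
      rw [mul_pow, mul_pow, Real.sq_sqrt hC.le, Real.sq_sqrt ht.le]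
      exact hV t ht htτ _ _
    calc _ ≤ ‖p 0‖ * (‖w 0‖ * (K * √t)) + ‖c‖ * (‖p 0‖ * (√C * √t * ‖w 0‖)) := by
          refine (norm_add_le _ _).trans (add_le_add b1 ?_)
          rw [norm_smul]
          gcongr
      _ = _ := by ring


lemma aux_cauchy (tmul : h →ₗ[ℂ] H →ₗ[ℂ] E)
    (opAtE : (E →L[ℂ] E) → h → h → (H →L[ℂ] H))
    (hopAtE : ∀ (T : E →L[ℂ] E) (u v : h) (ξ₁ ξ₂ : H),
      ⟪ξ₁, opAtE T u v ξ₂⟫ = ⟪tmul u ξ₁, T (tmul v ξ₂)⟫)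
    (S : E →L[ℂ] E) (hS : adjoint S * S = 1) (u : h) (Ω : H) (Z : H →L[ℂ] H)
    (hZ : Z = opAtE (S + adjoint S - (2 : ℂ) • (1 : E →L[ℂ] E)) u u) :
    (‖Z Ω‖ ^ 2) ^ 2 ≤ ‖(S - 1) (tmul u Ω)‖ ^ 2 * ‖⟪Ω, Z (Z (Z Ω))⟫‖ := by
  have hid : ∀ x y : E, ⟪x, (S + adjoint S - (2 : ℂ) • (1 : E →L[ℂ] E)) y⟫ =
      - ⟪(S - 1) x, (S - 1) y⟫ := by
    intro x y
    have : ⟪S x, S y⟫ = ⟪x, y⟫ := by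
      rw [← adjoint_inner_right, ← aux_mul, hS]; rfl
    simp only [sub_apply, add_apply, smul_apply, aux_one, inner_sub_left, inner_sub_right,
      inner_add_right, inner_smul_right, this, adjoint_inner_right]
    ring
  have hq : ∀ ξ ζ : H, ⟪ξ, Z ζ⟫ = - ⟪(S - 1) (tmul u ξ), (S - 1) (tmul u ζ)⟫ := by
    intro ξ ζ
    rw [hZ, hopAtE, hid]
  have hsa : ∀ ξ ζ : H, ⟪Z ξ, ζ⟫ = ⟪ξ, Z ζ⟫ := by
    intro ξ ζ
    rw [← inner_conj_symm, hq, hq, map_neg, inner_conj_symm]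
  have h1 : ‖Z Ω‖ ^ 2 ≤ ‖(S - 1) (tmul u Ω)‖ * ‖(S - 1) (tmul u (Z Ω))‖ := by
    have : ‖Z Ω‖ ^ 2 = ‖⟪Ω, Z (Z Ω)⟫‖ := by
      rw [← hsa, inner_self_eq_norm_sq_to_K]; simp
    rw [this, hq, norm_neg]
    exact norm_inner_le_norm _ _
  have h2 : ‖(S - 1) (tmul u (Z Ω))‖ ^ 2 = ‖⟪Ω, Z (Z (Z Ω))⟫‖ := by
    rw [← hsa, hq, norm_neg, inner_self_eq_norm_sq_to_K]; simp
  rw [← h2, ← mul_pow]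
  gcongr

lemma aux_diag
    (tmul : h →ₗ[ℂ] H →ₗ[ℂ] E)
    (opAtE : (E →L[ℂ] E) → h → h → (H →L[ℂ] H))
    (hopAtE : ∀ (T : E →L[ℂ] E) (u v : h) (ξ₁ ξ₂ : H),
      ⟪ξ₁, opAtE T u v ξ₂⟫ = ⟪tmul u ξ₁, T (tmul v ξ₂)⟫)
    (Ω : H) (S : ℝ → (E →L[ℂ] E)) (hS : ∀ t, 0 < t → adjoint (S t) * S t = 1)
    (C τ : ℝ) (hC0 : 0 < C) (hτ : 0 < τ)
    (hV : ∀ t, 0 < t → t < τ → ∀ (w : h), ‖(S t - 1) (tmul w Ω)‖ ^ 2 ≤ C * t * ‖w‖ ^ 2)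
    (hC : ∀ (u₁ v₁ u₂ v₂ u₃ v₃ : h) (ε₁ ε₂ ε₃ : Bool),
      Tendsto (fun t : ℝ => (1 / t) *
          ⟪Ω, ((opAtE ((if ε₁ then adjoint (S t) else S t) - 1) u₁ v₁) *
               (opAtE ((if ε₂ then adjoint (S t) else S t) - 1) u₂ v₂) *
               (opAtE ((if ε₃ then adjoint (S t) else S t) - 1) u₃ v₃)) Ω⟫)
        (nhdsWithin 0 (Set.Ioi 0)) (nhds 0))
    (u : h) :
    Tendsto (fun t : ℝ => ‖opAtE (S t + adjoint (S t) - (2 : ℂ) • (1 : E →L[ℂ] E)) u u Ω‖ / √t)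
      (nhdsWithin 0 (Set.Ioi 0)) (nhds 0) := by
  set Z : ℝ → (H →L[ℂ] H) :=
    fun t => opAtE (S t + adjoint (S t) - (2 : ℂ) • (1 : E →L[ℂ] E)) u u with hZ
  have hZX : ∀ t, Z t = opAtE (S t - 1) u u + opAtE (adjoint (S t) - 1) u u := by
    intro t
    ext ζ
    refine ext_inner_left ℂ fun ξ => ?_
    simp only [hZ, hopAtE, add_apply, inner_add_right, sub_apply, inner_sub_right, smul_apply,
      inner_smul_right, aux_one]
    ring
  have h3 : Tendsto (fun t : ℝ => (1 / t : ℂ) * ⟪Ω, Z t (Z t (Z t Ω))⟫)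
      (nhdsWithin 0 (Set.Ioi 0)) (nhds 0) := by
    have hh := fun a b c => hC u u u u u u a b c
    have := ((((hh false false false).add (hh false false true)).add
      ((hh false true false).add (hh false true true))).add
      (((hh true false false).add (hh true false true)).add
      ((hh true true false).add (hh true true true))))
    simp only [add_zero, if_true, Bool.false_eq_true, if_false] at this
    refine this.congr fun t => ?_
    rw [hZX]
    simp only [aux_mul, add_apply, map_add, inner_add_right]
    ring
  have h4 : Tendsto (fun t : ℝ => C * ‖u‖ ^ 2 * ‖(1 / t : ℂ) * ⟪Ω, Z t (Z t (Z t Ω))⟫‖)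
      (nhdsWithin 0 (Set.Ioi 0)) (nhds 0) := by
    simpa using h3.norm.const_mul (C * ‖u‖ ^ 2)
  have h5 : Tendsto (fun t : ℝ => √√(C * ‖u‖ ^ 2 * ‖(1 / t : ℂ) * ⟪Ω, Z t (Z t (Z t Ω))⟫‖))
      (nhdsWithin 0 (Set.Ioi 0)) (nhds 0) := by
    simpa using h4.sqrt.sqrt
  refine squeeze_zero' (Eventually.of_forall fun t => by positivity) ?_ h5
  filter_upwards [Ioo_mem_nhdsGT hτ] with t ht
  obtain ⟨ht0, htτ⟩ := ht
  have hc := aux_cauchy tmul opAtE hopAtE (S t) (hS t ht0) u Ω (Z t) rfl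
  refine Real.le_sqrt_of_sq_le (Real.le_sqrt_of_sq_le ?_)
  have e1 : ((‖Z t Ω‖ / √t) ^ 2) ^ 2 = (‖Z t Ω‖ ^ 2) ^ 2 / t ^ 2 := by
    rw [div_pow, div_pow, Real.sq_sqrt ht0.le]
  have e2 : ‖(1 / t : ℂ) * ⟪Ω, Z t (Z t (Z t Ω))⟫‖ = ‖⟪Ω, Z t (Z t (Z t Ω))⟫‖ / t := by
    rw [norm_mul]; simp [abs_of_pos ht0]; field_simp
  rw [e1, e2, div_le_iff₀ (by positivity)]
  refine hc.trans ((mul_le_mul_of_nonneg_right (hV t ht0 htτ u) (norm_nonneg _)).trans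
    (le_of_eq ?_))
  field_simp

lemma aux_polar (tmul : h →ₗ[ℂ] H →ₗ[ℂ] E)
    (opAtE : (E →L[ℂ] E) → h → h → (H →L[ℂ] H))
    (hopAtE : ∀ (T : E →L[ℂ] E) (u v : h) (ξ₁ ξ₂ : H),
      ⟪ξ₁, opAtE T u v ξ₂⟫ = ⟪tmul u ξ₁, T (tmul v ξ₂)⟫)
    (S : E →L[ℂ] E) (u v : h) (Ω : H) :
    ‖opAtE S u v Ω‖ ≤ ‖opAtE S (u + v) (u + v) Ω‖ + ‖opAtE S (u - v) (u - v) Ω‖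
      + ‖opAtE S (u + Complex.I • v) (u + Complex.I • v) Ω‖
      + ‖opAtE S (u - Complex.I • v) (u - Complex.I • v) Ω‖ := by
  have h1 : (4 : ℂ) • opAtE S u v Ω = opAtE S (u + v) (u + v) Ω - opAtE S (u - v) (u - v) Ω
      - Complex.I • opAtE S (u + Complex.I • v) (u + Complex.I • v) Ω
      + Complex.I • opAtE S (u - Complex.I • v) (u - Complex.I • v) Ω := by
    refine ext_inner_left ℂ fun ξ => ?_
    simp only [inner_smul_right, inner_add_right, inner_sub_right, hopAtE, map_add, map_sub,
      map_smul, LinearMap.add_apply, LinearMap.sub_apply, LinearMap.smul_apply,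
      inner_add_left, inner_sub_left, inner_smul_left, Complex.conj_I]
    ring_nf
    simp only [Complex.I_sq]
    ring
  have h2 : ‖(4 : ℂ) • opAtE S u v Ω‖ = 4 * ‖opAtE S u v Ω‖ := by rw [norm_smul]; simp
  have h3 : 4 * ‖opAtE S u v Ω‖ ≤ ‖opAtE S (u + v) (u + v) Ω‖ + ‖opAtE S (u - v) (u - v) Ω‖
      + ‖opAtE S (u + Complex.I • v) (u + Complex.I • v) Ω‖
      + ‖opAtE S (u - Complex.I • v) (u - Complex.I • v) Ω‖ := by
    rw [← h2, h1]
    refine (norm_add_le _ _).trans (add_le_add ((norm_sub_le _ _).trans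
      (add_le_add (norm_sub_le _ _) ?_)) ?_) <;> rw [norm_smul] <;> simp
  have := norm_nonneg (opAtE S u v Ω)
  linarith

end

theorem stmt17
    {h H E : Type*}
    [NormedAddCommGroup h] [InnerProductSpace ℂ h] [CompleteSpace h]
    [TopologicalSpace.SeparableSpace h]
    [NormedAddCommGroup H] [InnerProductSpace ℂ H] [CompleteSpace H]
    [TopologicalSpace.SeparableSpace H]
    [NormedAddCommGroup E] [InnerProductSpace ℂ E] [CompleteSpace E]
    (tmul : h →ₗ[ℂ] H →ₗ[ℂ] E)
    (htmul : ∀ (u v : h) (ξ ζ : H), ⟪tmul u ξ, tmul v ζ⟫ = ⟪u, v⟫ * ⟪ξ, ζ⟫)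
    (hdenseE : (Submodule.span ℂ (Set.range fun p : h × H => tmul p.1 p.2)).topologicalClosure = ⊤)
    (opAtE : (E →L[ℂ] E) → h → h → (H →L[ℂ] H))
    (hopAtE : ∀ (T : E →L[ℂ] E) (u v : h) (ξ₁ ξ₂ : H),
      ⟪ξ₁, opAtE T u v ξ₂⟫ = ⟪tmul u ξ₁, T (tmul v ξ₂)⟫)
    (Ω : H) (hΩ : ‖Ω‖ = 1)
    (U : ℝ → ℝ → (E →L[ℂ] E))
    (hUunitary : ∀ s t : ℝ, 0 ≤ s → s ≤ t →
      adjoint (U s t) * U s t = 1 ∧ U s t * adjoint (U s t) = 1)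
    -- (A1) evolution
    (hA1 : ∀ r s t : ℝ, 0 ≤ r → r ≤ s → s ≤ t → U r s * U s t = U r t)
    -- (A2a) commutation of increments over disjoint intervals
    (hA2a : ∀ s₁ t₁ s₂ t₂ : ℝ, 0 ≤ s₁ → s₁ ≤ t₁ → 0 ≤ s₂ → s₂ ≤ t₂ →
      Disjoint (Set.Ico s₁ t₁) (Set.Ico s₂ t₂) →
      ∀ u₁ v₁ u₂ v₂ : h,
        Commute (opAtE (U s₁ t₁) u₁ v₁) (opAtE (U s₂ t₂) u₂ v₂) ∧
        Commute (opAtE (U s₁ t₁) u₁ v₁) (opAtE (adjoint (U s₂ t₂)) u₂ v₂))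
    -- (A2b) factorisation of vacuum expectations over disjoint intervals
    (hA2b : ∀ s₁ t₁ s₂ t₂ : ℝ, 0 ≤ s₁ → s₁ ≤ t₁ → 0 ≤ s₂ → s₂ ≤ t₂ →
      Disjoint (Set.Ico s₁ t₁) (Set.Ico s₂ t₂) →
      ∀ (N M : ℕ) (a b : Fin N → ℝ) (q r : Fin M → ℝ)
        (ε : Fin N → Bool) (ε' : Fin M → Bool)
        (u v : Fin N → h) (p w : Fin M → h),
        (∀ i, s₁ ≤ a i ∧ a i ≤ b i ∧ b i ≤ t₁) →
        (∀ i j : Fin N, i < j → b i ≤ a j) →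
        (∀ i, s₂ ≤ q i ∧ q i ≤ r i ∧ r i ≤ t₂) →
        (∀ i j : Fin M, i < j → r i ≤ q j) →
        ⟪Ω, (((List.ofFn fun i => opAtE
                (if ε i then adjoint (U (a i) (b i)) else U (a i) (b i)) (u i) (v i)).prod) *
             ((List.ofFn fun i => opAtE
                (if ε' i then adjoint (U (q i) (r i)) else U (q i) (r i)) (p i) (w i)).prod)) Ω⟫
          = ⟪Ω, ((List.ofFn fun i => opAtE
                  (if ε i then adjoint (U (a i) (b i)) else U (a i) (b i)) (u i) (v i)).prod) Ω⟫
            * ⟪Ω, ((List.ofFn fun i => opAtE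
                  (if ε' i then adjoint (U (q i) (r i)) else U (q i) (r i)) (p i) (w i)).prod) Ω⟫)
    -- (A3) stationarity
    (hA3 : ∀ (s t : ℝ), 0 ≤ s → s ≤ t → ∀ (N : ℕ) (ε : Fin N → Bool) (u v : Fin N → h),
      ⟪Ω, ((List.ofFn fun i => opAtE
              (if ε i then adjoint (U s t) else U s t) (u i) (v i)).prod) Ω⟫
        = ⟪Ω, ((List.ofFn fun i => opAtE
              (if ε i then adjoint (U 0 (t - s)) else U 0 (t - s)) (u i) (v i)).prod) Ω⟫)
    -- (B) uniform continuity
    (hB : ∀ δ : ℝ, 0 < δ → ∃ τ : ℝ, 0 < τ ∧ ∀ t : ℝ, 0 < t → t < τ →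
      ∀ u v : h, ‖u‖ = 1 → ‖v‖ = 1 →
        ‖⟪Ω, (opAtE (U 0 t - 1) u v) Ω⟫‖ < δ)
    -- (C) Gaussian condition
    (hC : ∀ (u₁ v₁ u₂ v₂ u₃ v₃ : h) (ε₁ ε₂ ε₃ : Bool),
      Tendsto (fun t : ℝ => (1 / t) *
          ⟪Ω, ((opAtE ((if ε₁ then adjoint (U 0 t) else U 0 t) - 1) u₁ v₁) *
               (opAtE ((if ε₂ then adjoint (U 0 t) else U 0 t) - 1) u₂ v₂) *
               (opAtE ((if ε₃ then adjoint (U 0 t) else U 0 t) - 1) u₃ v₃)) Ω⟫)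
        (nhdsWithin 0 (Set.Ioi 0)) (nhds 0))
    (u v : h) (n : ℕ) (hn : 1 ≤ n)
    (p w : Fin n → h) (ε : Fin n → Bool) :
    Filter.Tendsto (fun t : ℝ => (1 / t) *
        ⟪(opAtE (U 0 t + adjoint (U 0 t) - (2 : ℂ) • (1 : E →L[ℂ] E)) u v) Ω,
          (((List.ofFn fun k =>
              opAtE (if ε k then adjoint (U 0 t) else U 0 t) (p k) (w k)).prod
            - (∏ k, ⟪p k, w k⟫) • (1 : H →L[ℂ] H))) Ω⟫)
      (nhdsWithin 0 (Set.Ioi 0)) (nhds 0) := by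
  obtain ⟨C, τ, hC0, hτ, hrate⟩ := aux_rate tmul htmul hdenseE opAtE hopAtE Ω hΩ U hUunitary hA1
    (by
      intro s t hs hst u v p w
      have := hA2b 0 s s t le_rfl hs hs hst
        (Set.disjoint_left.2 fun x hx hx' => not_le.2 hx.2 hx'.1) 1 1
        (fun _ => 0) (fun _ => s) (fun _ => s) (fun _ => t) (fun _ => false) (fun _ => false)
        (fun _ => u) (fun _ => v) (fun _ => p) (fun _ => w)
        (fun _ => ⟨le_rfl, hs, le_rfl⟩) (fun i j hij => absurd hij (by simp [Subsingleton.elim i j]))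
        (fun _ => ⟨le_rfl, hst, le_rfl⟩) (fun i j hij => absurd hij (by simp [Subsingleton.elim i j]))
      simpa [aux_mul] using this)
    (by
      intro s t hs hst u v
      simpa using hA3 s t hs hst 1 (fun _ => false) (fun _ => u) (fun _ => v))
    hB
  have hdiag := aux_diag tmul opAtE hopAtE Ω (fun t => U 0 t)
    (fun t ht => (hUunitary 0 t le_rfl ht.le).1) C τ hC0 hτ
    (fun t ht htτ w => by simpa using hrate t ht htτ w false) hC
  have hiso : ∀ S : E →L[ℂ] E, adjoint S * S = 1 → ∀ x, ‖S x‖ ≤ ‖x‖ := by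
    intro S hS x
    have : ⟪S x, S x⟫ = ⟪x, x⟫ := by
      rw [← adjoint_inner_right, ← aux_mul, hS]; rfl
    rw [inner_self_eq_norm_sq_to_K, inner_self_eq_norm_sq_to_K] at this
    have h2 : ‖S x‖ ^ 2 = ‖x‖ ^ 2 := by exact_mod_cast this
    exact ((sq_eq_sq₀ (norm_nonneg _) (norm_nonneg _)).1 h2).le
  obtain ⟨K, hK, hKt⟩ := aux_prod tmul htmul opAtE hopAtE Ω C τ hC0
    (fun t e => if e then adjoint (U 0 t) else U 0 t)
    (by
      intro t ht e x
      have hu := hUunitary 0 t le_rfl ht.le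
      cases e with
      | false => simpa using hiso _ hu.1 x
      | true => simpa using hiso _ (by rw [adjoint_adjoint]; exact hu.2) x)
    hrate n p w ε
  have hsum := (((hdiag (u + v)).add (hdiag (u - v))).add (hdiag (u + Complex.I • v))).add
    (hdiag (u - Complex.I • v))
  have hlim := hsum.mul_const K
  simp only [add_zero, zero_mul] at hlim
  refine squeeze_zero_norm' ?_ hlim
  filter_upwards [Ioo_mem_nhdsGT hτ] with t ht
  obtain ⟨ht0, htτ⟩ := ht
  have hp := aux_polar tmul opAtE hopAtE
    (U 0 t + adjoint (U 0 t) - (2 : ℂ) • (1 : E →L[ℂ] E)) u v Ω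
  have hy := hKt t ht0 htτ
  have hst : 0 < √t := Real.sqrt_pos.2 ht0
  have hss : √t * √t = t := Real.mul_self_sqrt ht0.le
  rw [← add_div, ← add_div, ← add_div, norm_mul]
  have hnt : ‖(1 / t : ℂ)‖ = 1 / t := by simp [abs_of_pos ht0]
  rw [hnt]
  refine (mul_le_mul_of_nonneg_left ((norm_inner_le_norm _ _).trans
    (mul_le_mul hp hy (norm_nonneg _) (by positivity))) (by positivity)).trans (le_of_eq ?_)
  have key : ∀ a : ℝ, 1 / t * (a * (K * √t)) = a / √t * K := by
    intro a
    have h6 : 1 / t = 1 / √t / √t := by rw [div_div, hss]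
    rw [h6]
    field_simp
  exact key _
end
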